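/- arXiv:2207.05554 — 2 statements merged into one kernel-verified Lean document; each statement's English description precedes it below -/
import Mathlib

section
/- Let $G_n = a_1(n)\alpha_1^n + \cdots + a_d(n)\alpha_d^n$ and $H_m = b_1(m)\beta_1^m + \cdots + b_t(m)\beta_t^m$ be two non-degenerate linear recurrence sequences defined over a function field $F$ in one variable over $\mathbb{C}$. Assume that no $\alpha_i$ and no $\beta_j$ is contained in $\mathbb{C}$, and that for every $j \in \{1,\ldots,t\}$ the pair $(\alpha_1, \beta_j)$ is multiplicatively independent. Let $\mu$ be a valuation on $F$ such that $\mu(\alpha_1) \le \mu(\alpha_i)$ for all $i \in \{1,\ldots,d\}$, and fix $a, b \in F^*$. Then there exist effectively computable constants $c_1$ and $C'$, independent of $n$ and $m$, such that for all pairs $(n,m)$ of non-negative integers with $\max\{n,m\} > c_1$ one has $\mu(a G_n - b H_m) \le \mu(G_n) + C'$. -/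
/-!
STATEMENT 1: Theorem 2 (one index large) of the paper, for linear recurrence
sequences over a function field `F` in one variable over `ℂ`.
-/

/-- A (normalized discrete) valuation on a function field `F` over `ℂ`:
a map `F → ℤ ∪ {∞}` that is `∞` exactly at `0`, additive on products,
satisfies the ultrametric inequality, is trivial on the constants `ℂ`,
and attains the value `1` (i.e. is a normalized discrete valuation). -/
structure FFValuation (F : Type*) [Field F] [Algebra ℂ F] where
  v : F → WithTop ℤ
  v_zero : v 0 = ⊤
  v_ne_top : ∀ f : F, f ≠ 0 → v f ≠ ⊤
  v_mul : ∀ f g : F, v (f * g) = v f + v g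
  v_add : ∀ f g : F, min (v f) (v g) ≤ v (f + g)
  v_const : ∀ c : ℂ, c ≠ 0 → v (algebraMap ℂ F c) = 0
  v_exists_one : ∃ f : F, v f = 1

/-- `f` lies in the field of constants `ℂ` of `F`. -/
def IsConst (F : Type*) [Field F] [Algebra ℂ F] (f : F) : Prop :=
  f ∈ Set.range (algebraMap ℂ F)

/-- `α` and `β` are multiplicatively independent: `α^r β^s ∈ ℂ` forces `r = s = 0`. -/
def MultIndep (F : Type*) [Field F] [Algebra ℂ F] (α β : F) : Prop :=
  ∀ r s : ℤ, IsConst F (α ^ r * β ^ s) → r = 0 ∧ s = 0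

/-!
Let `D` be a derivation of `L / k` that vanishes only on algebraic elements, scaled so that it does
not decrease a given valuation, i.e. `v (D f) ≤ v f`. Up to a bounded factor, `f` is dominated by
`f + ∑ u i` unless some quotient `f / u i` lies in a fixed set of bounded height: dividing the sum
by one of the `u i` and differentiating leaves one summand fewer, and it changes the other quotients
by factors of bounded height, because the logarithmic derivatives of `p(n) α ^ n` have bounded
height.

For quotients of two terms `p(n) α ^ n` and `q(m) β ^ m` the exceptional case occurs only finitely
often: a valuation takes finitely many values on a set of bounded height, whereas every
transcendental element has powers of arbitrarily large value at some place. It remains to take for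
`f` the term of the root `α₁`, which dominates `G_n`, when `n` is large, and `G_n` itself, for each
of the finitely many remaining `n`, when `m` is large.
-/

noncomputable section

open IntermediateField IntermediateField.algebraAdjoinAdjoin Polynomial IsDedekindDomain

section LogarithmicDerivative

variable {k L : Type*} [Field k] [Field L] [Algebra k L] (D : Derivation k L L)

/-- The logarithmic derivative `D f / f`, with value `0` at `f = 0`. -/
def logDerivative (f : L) : L := D f / f

variable {f g : L}

theorem mul_logDerivative (hf : f ≠ 0) : f * logDerivative D f = D f :=
  mul_div_cancel₀ (D f) hf

theorem logDerivative_mul (hf : f ≠ 0) (hg : g ≠ 0) :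
    logDerivative D (f * g) = logDerivative D f + logDerivative D g := by
  simp only [logDerivative, D.leibniz, smul_eq_mul]
  field_simp
  ring

theorem logDerivative_div (hf : f ≠ 0) (hg : g ≠ 0) :
    logDerivative D (f / g) = logDerivative D f - logDerivative D g := by
  rw [eq_sub_iff_add_eq, ← logDerivative_mul D (div_ne_zero hf hg) hg, div_mul_cancel₀ f hg]

theorem logDerivative_zpow (hf : f ≠ 0) (n : ℤ) :
    logDerivative D (f ^ n) = n * logDerivative D f := by
  simp only [logDerivative, D.leibniz_zpow, zpow_sub_one₀ hf, zsmul_eq_mul, smul_eq_mul]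
  field_simp

theorem derivation_div (hf : f ≠ 0) (hg : g ≠ 0) :
    D (f / g) = f / g * (logDerivative D f - logDerivative D g) := by
  rw [← logDerivative_div D hf hg, mul_logDerivative D (div_ne_zero hf hg)]

theorem logDerivative_derivation (hf : D f ≠ 0) :
    logDerivative D (D f) = logDerivative D f + logDerivative D (logDerivative D f) := by
  have hf0 : f ≠ 0 := fun h ↦ hf (h ▸ map_zero D)
  have hlog : logDerivative D f ≠ 0 := div_ne_zero hf hf0
  rw [← logDerivative_mul D hf0 hlog, mul_logDerivative D hf0]

end LogarithmicDerivative

section Uniformizer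

variable {R F : Type*} [CommRing R] [IsDedekindDomain R] [Field F] [Algebra R F]
  [IsFractionRing R F] (p : HeightOneSpectrum R)

theorem exists_adicValuation_eq_zpow :
    ∃ π : F, π ≠ 0 ∧ ∀ f ≠ 0, ∃ n : ℤ, p.valuation F f = p.valuation F (π ^ n) := by
  obtain ⟨π, hπ⟩ := p.valuation_exists_uniformizer F
  have hπ0 : π ≠ 0 := (Valuation.ne_zero_iff _).1 (hπ ▸ WithZero.exp_ne_zero)
  refine ⟨π, hπ0, fun f hf ↦ ⟨-WithZero.log (p.valuation F f), ?_⟩⟩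
  rw [map_zpow₀, hπ, ← WithZero.exp_zsmul, smul_eq_mul, neg_mul_neg, mul_one,
    WithZero.exp_log ((Valuation.ne_zero_iff _).2 hf)]

end Uniformizer

section DerivationAdicValuation

variable {k R F Γ : Type*} [Field k] [CommRing R] [Algebra k R] [Algebra.FiniteType k R]
  [Field F] [Algebra R F] [Algebra k F] [IsScalarTower k R F]
  [LinearOrderedCommGroupWithZero Γ]

theorem exists_forall_valuation_derivation_algebraMap_le (v : Valuation F Γ)
    (hv : ∀ r : R, v (algebraMap R F r) ≤ 1) (D : Derivation k F F) :
    ∃ C, ∀ r : R, v (D (algebraMap R F r)) ≤ C := by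
  obtain ⟨s, hs⟩ := Algebra.FiniteType.out (R := k) (A := R)
  obtain ⟨C, hC⟩ := (s.image fun r ↦ v (D (algebraMap R F r))).bddAbove
  refine ⟨C, fun r ↦ ?_⟩
  have hr : r ∈ Algebra.adjoin k (s : Set R) := hs ▸ Algebra.mem_top
  induction hr using Algebra.adjoin_induction with
  | mem r hr => exact hC (Finset.mem_coe.2 (Finset.mem_image_of_mem _ hr))
  | algebraMap c =>
    rw [← IsScalarTower.algebraMap_apply, D.map_algebraMap, map_zero]
    exact zero_le
  | add x y _ _ hx hy =>
    rw [map_add, map_add]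
    exact v.map_add_le hx hy
  | mul x y _ _ hx hy =>
    rw [map_mul, D.leibniz, smul_eq_mul, smul_eq_mul]
    refine v.map_add_le ?_ ?_ <;> rw [map_mul]
    · exact mul_le_of_le_one_of_le (hv x) hy
    · exact mul_le_of_le_one_of_le (hv y) hx

variable [IsDedekindDomain R] [IsFractionRing R F] (p : HeightOneSpectrum R)

theorem exists_forall_adicValuation_derivation_le_of_le_one (D : Derivation k F F) :
    ∃ C, ∀ f, p.valuation F f ≤ 1 → p.valuation F (D f) ≤ C := by
  obtain ⟨C, hC⟩ :=
    exists_forall_valuation_derivation_algebraMap_le (p.valuation F) p.valuation_le_one D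
  refine ⟨C, fun f hf ↦ ?_⟩
  obtain ⟨r, s, hrs⟩ := p.exists_primeCompl_mul_eq_of_integer f hf
  have hs : p.valuation F (algebraMap R F s) = 1 := p.valuation_eq_one_iff_notMem.2 s.2
  have hD : algebraMap R F s * D f = D (algebraMap R F r) - f * D (algebraMap R F s) := by
    rw [← hrs, D.leibniz, smul_eq_mul, smul_eq_mul, add_sub_cancel_left]
  rw [← one_mul (p.valuation F (D f)), ← hs, ← map_mul, hD]
  refine (p.valuation F).map_sub_le (hC r) ?_
  rw [map_mul]
  exact mul_le_of_le_one_of_le hf (hC s)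

theorem exists_forall_adicValuation_derivation_le (D : Derivation k F F) :
    ∃ c ≠ 0, ∀ f, p.valuation F (D f) ≤ p.valuation F (c * f) := by
  obtain ⟨C, hC⟩ := exists_forall_adicValuation_derivation_le_of_le_one (F := F) p D
  obtain ⟨π, hπ0, hπ⟩ := exists_adicValuation_eq_zpow (F := F) p
  obtain ⟨c, hc⟩ := p.valuation_surjective F (1 ⊔ (C ⊔ p.valuation F (logDerivative D π)))
  have hc0 : c ≠ 0 :=
    (Valuation.ne_zero_iff _).1 (hc ▸ (zero_lt_one.trans_le le_sup_left).ne')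
  refine ⟨c, hc0, fun f ↦ ?_⟩
  obtain rfl | hf := eq_or_ne f 0
  · simp only [mul_zero, map_zero, le_refl]
  obtain ⟨n, hn⟩ := hπ f hf
  have hπn : π ^ n ≠ 0 := zpow_ne_zero n hπ0
  have hunit : p.valuation F (f / π ^ n) = 1 := by
    rw [map_div₀, hn, div_self ((Valuation.ne_zero_iff _).2 hπn)]
  have hlog : logDerivative D f = logDerivative D (f / π ^ n) + n * logDerivative D π := by
    rw [← logDerivative_zpow D hπ0, logDerivative_div D hf hπn, sub_add_cancel]
  have hn1 : p.valuation F (n : F) ≤ 1 := by simpa using p.valuation_le_one (K := F) (n : R)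
  rw [← mul_logDerivative D hf, mul_comm, map_mul, map_mul, hc, hlog]
  refine mul_le_mul_left ((p.valuation F).map_add_le ?_ ?_) _
  · rw [logDerivative, map_div₀, hunit, div_one]
    exact (hC _ hunit.le).trans (le_sup_left.trans le_sup_right)
  · rw [map_mul]
    exact (mul_le_of_le_one_left' hn1).trans (le_sup_right.trans le_sup_right)

end DerivationAdicValuation

section DominatingDedekind

variable {R F Γ : Type*} [CommRing R] [IsDedekindDomain R] [Field F] [Algebra R F]
  [IsFractionRing R F] [LinearOrderedCommGroupWithZero Γ]

theorem isEquiv_adicValuation (v : Valuation F Γ) (hv : ∀ r : R, v (algebraMap R F r) ≤ 1)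
    (p : HeightOneSpectrum R) (mem_p : ∀ r, r ∈ p.asIdeal ↔ v (algebraMap R F r) < 1) :
    v.IsEquiv (p.valuation F) := by
  have one_of_notMem (s : p.asIdeal.primeCompl) : v (algebraMap R F s) = 1 :=
    (hv s).antisymm <| not_lt.1 fun h ↦ s.2 <| (mem_p s).2 h
  have eq_of_mul_eq {x : F} {r : R} {s : p.asIdeal.primeCompl}
      (h : x * algebraMap R F s = algebraMap R F r) : v x = v (algebraMap R F r) := by
    rw [← h, map_mul, one_of_notMem, mul_one]
  refine (Valuation.isEquiv_of_val_le_one fun x ↦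
    ⟨fun hx ↦ ?_, fun hx ↦ not_lt.1 fun hlt ↦ ?_⟩).symm
  · obtain ⟨r, s, hrs⟩ := p.exists_primeCompl_mul_eq_of_integer x hx
    exact (eq_of_mul_eq hrs).trans_le (hv r)
  · have hinv : p.valuation F x⁻¹ < 1 := map_inv₀ (p.valuation F) x ▸ inv_lt_one_of_one_lt₀ hlt
    obtain ⟨r, s, hrs⟩ := p.exists_primeCompl_mul_eq_of_integer x⁻¹ hinv.le
    have hr : p.valuation F (algebraMap R F r) < 1 := by
      rw [← hrs, map_mul]
      exact mul_lt_one_of_lt_of_le hinv (p.valuation_le_one _)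
    have hx' : v x⁻¹ < 1 :=
      (eq_of_mul_eq hrs).trans_lt ((mem_p r).1 ((p.valuation_lt_one_iff_mem r).1 hr))
    rw [map_inv₀] at hx'
    exact hx.not_gt ((inv_lt_one_iff₀.1 hx').resolve_left fun h ↦ by
      rw [(Valuation.zero_iff v).1 (le_zero_iff.1 h), map_zero] at hlt
      exact not_lt_zero hlt)

theorem exists_isEquiv_adicValuation (v : Valuation F Γ) [v.IsNontrivial]
    (hv : ∀ r : R, v (algebraMap R F r) ≤ 1) :
    ∃ p : HeightOneSpectrum R, v.IsEquiv (p.valuation F) := by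
  let P : Ideal R := (IsLocalRing.maximalIdeal v.valuationSubring).comap
    ((algebraMap R F).codRestrict v.valuationSubring.toSubring hv)
  have mem_P (r : R) : r ∈ P ↔ v (algebraMap R F r) < 1 := by
    rw [Ideal.mem_comap]
    exact Valuation.Integer.not_isUnit_iff_valuation_lt_one
  have P_ne_bot : P ≠ ⊥ := fun hbot ↦ by
    have eq_one (r : R) (hr : r ≠ 0) : v (algebraMap R F r) = 1 :=
      (hv r).antisymm <| not_lt.1 fun h ↦ hr <| by rwa [← mem_P, hbot] at h
    obtain ⟨x, hx0, hx1⟩ := Valuation.IsNontrivial.exists_val_nontrivial (v := v)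
    obtain ⟨r, s, hs, rfl⟩ := IsFractionRing.div_surjective (A := R) x
    have hr : r ≠ 0 := by rintro rfl; simp at hx0
    rw [map_div₀, eq_one s (nonZeroDivisors.ne_zero hs), div_one, eq_one r hr] at hx1
    exact hx1 rfl
  exact ⟨⟨P, Ideal.IsPrime.comap _, P_ne_bot⟩, isEquiv_adicValuation v hv _ mem_P⟩

end DominatingDedekind

section FunctionFieldDerivation

variable {k L Γ : Type*} [Field k] [Field L] [Algebra k L] [LinearOrderedCommGroupWithZero Γ]

theorem exists_derivation_ne_zero [Algebra.EssFiniteType k L] [Algebra.Transcendental k L] :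
    ∃ D : Derivation k L L, D ≠ 0 := by
  by_contra! h
  have : Subsingleton (Derivation k L L) := subsingleton_of_forall_eq 0 h
  have : Subsingleton (Module.Dual L Ω[L⁄k]) :=
    (KaehlerDifferential.linearMapEquivDerivation k L).toEquiv.subsingleton
  have : Algebra.FormallyUnramified k L := ⟨(Module.subsingleton_dual_iff L).1 this⟩
  have := Algebra.FormallyUnramified.isSeparable k L
  exact (Algebra.transcendental_iff_not_isAlgebraic (R := k) (A := L)).1 ‹_› inferInstance

theorem derivation_eq_zero_of_isSeparable_adjoin {f : L} [Algebra.IsSeparable k⟮f⟯ L]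
    {D : Derivation k L L} (hf : D f = 0) : D = 0 := by
  have hD : ∀ x ∈ k⟮f⟯, D x = 0 := fun x hx ↦ by
    induction hx using adjoin_induction with
    | mem x hx => rwa [Set.mem_singleton_iff.1 hx]
    | algebraMap x => exact D.map_algebraMap x
    | add x y _ _ hx hy => rw [map_add, hx, hy, add_zero]
    | inv x _ hx => rw [D.leibniz_inv, hx, smul_zero]
    | mul x y _ _ hx hy => rw [D.leibniz, hx, hy, smul_zero, smul_zero, add_zero]
  let D' : Derivation k⟮f⟯ L L := .mk'
    { D.toLinearMap with map_smul' := fun c x ↦ by simp [Algebra.smul_def, hD c c.2] } D.leibniz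
  have := Algebra.FormallyUnramified.of_isSeparable k⟮f⟯ L
  have hD' : D' = 0 :=
    (KaehlerDifferential.linearMapEquivDerivation k⟮f⟯ L).symm.toEquiv.subsingleton.elim _ _
  exact Derivation.ext fun x ↦ congrArg (· x) hD'

theorem isPrincipalIdealRing_adjoin_singleton (y : L) :
    IsPrincipalIdealRing (Algebra.adjoin k {y}) :=
  .of_surjective (aeval (⟨y, Algebra.self_mem_adjoin_singleton k y⟩ : Algebra.adjoin k {y}))
    fun ⟨z, hz⟩ ↦ by
      obtain ⟨p, rfl⟩ := Algebra.adjoin_singleton_eq_range_aeval k y ▸ hz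
      exact ⟨p, Subtype.ext (by simp)⟩

theorem valuation_le_one_of_mem_integralClosure_adjoin (v : Valuation L Γ) [v.IsTrivialOn k]
    {x y : L} (hy : v y ≤ 1) (hx : x ∈ integralClosure (Algebra.adjoin k {y}) L) : v x ≤ 1 := by
  have adjoin_le : ∀ z ∈ Algebra.adjoin k {y}, v z ≤ 1 := fun z hz ↦ by
    induction hz using Algebra.adjoin_induction with
    | mem z hz => rwa [Set.mem_singleton_iff.1 hz]
    | algebraMap c => exact Valuation.IsTrivialOn.valuation_algebraMap_le_one v c
    | add z w _ _ hz hw => exact v.map_add_le hz hw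
    | mul z w _ _ hz hw => exact (map_mul v z w).trans_le (mul_le_one' hz hw)
  obtain ⟨p, hp, hpx⟩ := hx
  have hint : IsIntegral v.integer x :=
    ⟨p.map ((algebraMap (Algebra.adjoin k {y}) L).codRestrict v.integer
      fun z ↦ adjoin_le z z.2), hp.map _, by rw [eval₂_map]; exact hpx⟩
  exact (Valuation.integer.integers v).mem_of_integral hint

theorem exists_forall_valuation_derivation_le_of_isSeparable_adjoin (v : Valuation L Γ)
    [v.IsTrivialOn k] [v.IsNontrivial] {y : L} (hy : v y ≤ 1) [FiniteDimensional k⟮y⟯ L]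
    [Algebra.IsSeparable k⟮y⟯ L] (D : Derivation k L L) :
    ∃ c ≠ 0, ∀ f, v (D f) ≤ v (c * f) := by
  let A := Algebra.adjoin k {y}
  let R := integralClosure A L
  have : IsPrincipalIdealRing A := isPrincipalIdealRing_adjoin_singleton y
  have : IsDedekindDomain R := integralClosure.isDedekindDomain A k⟮y⟯ L
  have : IsFractionRing R L := integralClosure.isFractionRing_of_finite_extension k⟮y⟯ L
  have : Module.Finite A R := IsIntegralClosure.finite A k⟮y⟯ L R
  have : Algebra.FiniteType k A := (Subalgebra.fg_iff_finiteType _).1 ⟨{y}, by simp [A]⟩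
  have : Algebra.FiniteType k R := .trans (S := A) inferInstance inferInstance
  obtain ⟨p, hp⟩ := exists_isEquiv_adicValuation (R := R) v
    fun r ↦ valuation_le_one_of_mem_integralClosure_adjoin (k := k) v hy r.2
  obtain ⟨c, hc0, hc⟩ := exists_forall_adicValuation_derivation_le p D
  exact ⟨c, hc0, fun f ↦ hp.le_iff_le.2 (hc f)⟩

variable [Algebra (RatFunc k) L] [IsScalarTower k (RatFunc k) L] [FunctionField k L]

theorem exists_forall_valuation_derivation_le [CharZero k] (v : Valuation L Γ)
    [v.IsTrivialOn k] (D : Derivation k L L) : ∃ c ≠ 0, ∀ f, v (D f) ≤ v (c * f) := by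
  by_cases hv : v.IsNontrivial
  · obtain ⟨y, hy0, hy1⟩ := Valuation.isNontrivial_iff_exists_lt_one v |>.1 hv
    have := FunctionField.finiteDimensional_of_adjoin_transcendental
      (v.transcendental_of_ne_one k y hy0 hy1.ne)
    exact exists_forall_valuation_derivation_le_of_isSeparable_adjoin v hy1.le D
  · have eq_one {f : L} (hf : f ≠ 0) : v f = 1 :=
      by_contra fun h ↦ hv ⟨⟨f, (v.ne_zero_iff).2 hf, h⟩⟩
    refine ⟨1, one_ne_zero, fun f ↦ ?_⟩
    obtain rfl | hf := eq_or_ne f 0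
    · simp only [map_zero, mul_zero, le_refl]
    obtain hDf | hDf := eq_or_ne (D f) 0
    · simp only [hDf, map_zero, zero_le]
    · rw [one_mul, eq_one hf, eq_one hDf]

theorem exists_derivation_isAlgebraic_of_eq_zero_valuation_le [CharZero k] (v : Valuation L Γ)
    [v.IsTrivialOn k] :
    ∃ D : Derivation k L L, (∀ f, D f = 0 → IsAlgebraic k f) ∧ ∀ f, v (D f) ≤ v f := by
  have : Algebra.EssFiniteType k (RatFunc k) :=
    have := Algebra.EssFiniteType.of_isLocalization (R := k[X]) (RatFunc k) (nonZeroDivisors k[X])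
    .comp k k[X] (RatFunc k)
  have : Algebra.EssFiniteType k L := .comp k (RatFunc k) L
  have : Algebra.Transcendental k L := ⟨algebraMap (RatFunc k) L RatFunc.X,
    (transcendental_algebraMap_iff (algebraMap (RatFunc k) L).injective).2 RatFunc.transcendental_X⟩
  obtain ⟨D, hD⟩ := exists_derivation_ne_zero (k := k) (L := L)
  obtain ⟨c, hc0, hc⟩ := exists_forall_valuation_derivation_le v D
  refine ⟨c⁻¹ • D, fun f hf ↦ ?_, fun f ↦ ?_⟩
  · by_contra htrans
    have := FunctionField.finiteDimensional_of_adjoin_transcendental htrans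
    have hDf : D f = 0 := by simpa [hc0] using hf
    exact hD (derivation_eq_zero_of_isSeparable_adjoin hDf)
  · calc v (c⁻¹ * D f) = v c⁻¹ * v (D f) := map_mul ..
      _ ≤ v c⁻¹ * v (c * f) := mul_le_mul_right (hc f) _
      _ = v f := by rw [← map_mul, inv_mul_cancel_left₀ hc0]

end FunctionFieldDerivation

section BoundedHeight

open scoped Pointwise

variable {k L Γ : Type*} [Field k] [Field L] [Algebra k L]

variable (k) in
/-- A set of elements of `L` has bounded height over `k` if its members are quotients of elements
of one finite-dimensional `k`-subspace. When `L` is a function field over `k`, this says that the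
degrees of the members are bounded. -/
def IsBoundedHeight (S : Set L) : Prop :=
  ∃ V : Submodule k L, V.FG ∧ ∀ f ∈ S, ∃ a ∈ V, ∃ b ∈ V, b ≠ 0 ∧ f = a / b

namespace IsBoundedHeight

variable {S T : Set L}

theorem mono (hT : IsBoundedHeight k T) (hST : S ⊆ T) : IsBoundedHeight k S :=
  hT.imp fun _ hV ↦ ⟨hV.1, fun f hf ↦ hV.2 f (hST hf)⟩

theorem of_fg {V : Submodule k L} (hV : V.FG) : IsBoundedHeight k (V : Set L) :=
  ⟨V ⊔ k ∙ 1, hV.sup (Submodule.fg_span_singleton _), fun f hf ↦ ⟨f, Submodule.mem_sup_left hf, 1,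
    Submodule.mem_sup_right (Submodule.mem_span_singleton_self _), one_ne_zero, (div_one f).symm⟩⟩

variable (k) in
theorem of_finite (hS : S.Finite) : IsBoundedHeight k S :=
  (of_fg (Submodule.fg_span hS)).mono Submodule.subset_span

theorem union (hS : IsBoundedHeight k S) (hT : IsBoundedHeight k T) :
    IsBoundedHeight k (S ∪ T) := by
  obtain ⟨V, hV, hS⟩ := hS
  obtain ⟨W, hW, hT⟩ := hT
  refine ⟨V ⊔ W, hV.sup hW, fun f hf ↦ ?_⟩
  obtain hf | hf := hf
  · obtain ⟨a, ha, b, hb, h⟩ := hS f hf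
    exact ⟨a, Submodule.mem_sup_left ha, b, Submodule.mem_sup_left hb, h⟩
  · obtain ⟨a, ha, b, hb, h⟩ := hT f hf
    exact ⟨a, Submodule.mem_sup_right ha, b, Submodule.mem_sup_right hb, h⟩

theorem iUnion {ι : Type*} [Finite ι] {S : ι → Set L} (hS : ∀ i, IsBoundedHeight k (S i)) :
    IsBoundedHeight k (⋃ i, S i) := by
  choose V hV hS using hS
  refine ⟨⨆ i, V i, Submodule.fg_iSup _ hV, fun f hf ↦ ?_⟩
  obtain ⟨i, hi⟩ := Set.mem_iUnion.1 hf
  obtain ⟨a, ha, b, hb, h⟩ := hS i f hi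
  exact ⟨a, Submodule.mem_iSup_of_mem i ha, b, Submodule.mem_iSup_of_mem i hb, h⟩

theorem mul (hS : IsBoundedHeight k S) (hT : IsBoundedHeight k T) :
    IsBoundedHeight k (S * T) := by
  obtain ⟨V, hV, hS⟩ := hS
  obtain ⟨W, hW, hT⟩ := hT
  refine ⟨V * W, hV.mul hW, ?_⟩
  rintro _ ⟨f, hf, g, hg, rfl⟩
  obtain ⟨a, ha, b, hb, hb0, rfl⟩ := hS f hf
  obtain ⟨c, hc, d, hd, hd0, rfl⟩ := hT g hg
  exact ⟨a * c, Submodule.mul_mem_mul ha hc, b * d, Submodule.mul_mem_mul hb hd,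
    mul_ne_zero hb0 hd0, div_mul_div_comm a b c d⟩

theorem inv (hS : IsBoundedHeight k S) : IsBoundedHeight k S⁻¹ := by
  obtain ⟨V, hV, hS⟩ := hS
  refine ⟨V, hV, fun f hf ↦ ?_⟩
  obtain ⟨a, ha, b, hb, hb0, h⟩ := hS _ hf
  obtain rfl | ha0 := eq_or_ne a 0
  · exact ⟨0, ha, b, hb, hb0, by simpa only [zero_div, inv_eq_zero] using h⟩
  · exact ⟨b, hb, a, ha, ha0, by rw [← inv_inv f, h, inv_div]⟩

theorem div (hS : IsBoundedHeight k S) (hT : IsBoundedHeight k T) :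
    IsBoundedHeight k (S / T) :=
  div_eq_mul_inv S T ▸ hS.mul hT.inv

theorem add (hS : IsBoundedHeight k S) (hT : IsBoundedHeight k T) :
    IsBoundedHeight k (S + T) := by
  obtain ⟨V, hV, hS⟩ := hS
  obtain ⟨W, hW, hT⟩ := hT
  refine ⟨V * W, hV.mul hW, ?_⟩
  rintro _ ⟨f, hf, g, hg, rfl⟩
  obtain ⟨a, ha, b, hb, hb0, rfl⟩ := hS f hf
  obtain ⟨c, hc, d, hd, hd0, rfl⟩ := hT g hg
  exact ⟨a * d + b * c, add_mem (Submodule.mul_mem_mul ha hd) (Submodule.mul_mem_mul hb hc),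
    b * d, Submodule.mul_mem_mul hb hd, mul_ne_zero hb0 hd0, div_add_div a c hb0 hd0⟩

theorem neg (hS : IsBoundedHeight k S) : IsBoundedHeight k (-S) := by
  obtain ⟨V, hV, hS⟩ := hS
  refine ⟨V, hV, fun f hf ↦ ?_⟩
  obtain ⟨a, ha, b, hb, hb0, h⟩ := hS _ hf
  exact ⟨-a, V.neg_mem ha, b, hb, hb0, by rw [neg_div, ← h, neg_neg]⟩

theorem sub (hS : IsBoundedHeight k S) (hT : IsBoundedHeight k T) :
    IsBoundedHeight k (S - T) :=
  sub_eq_add_neg S T ▸ hS.add hT.neg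

theorem image_derivation (hS : IsBoundedHeight k S) (D : Derivation k L L) :
    IsBoundedHeight k (D '' S) := by
  obtain ⟨V, hV, hS⟩ := hS
  refine ⟨V.map (D : L →ₗ[k] L) * V ⊔ V * V, ((hV.map _).mul hV).sup (hV.mul hV), ?_⟩
  rintro _ ⟨f, hf, rfl⟩
  obtain ⟨a, ha, b, hb, hb0, rfl⟩ := hS f hf
  have mul_mem {x y : L} (hx : x ∈ V) (hy : y ∈ V) : D x * y ∈ V.map (D : L →ₗ[k] L) * V :=
    Submodule.mul_mem_mul (Submodule.mem_map_of_mem hx) hy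
  refine ⟨D a * b - D b * a, Submodule.mem_sup_left (sub_mem (mul_mem ha hb) (mul_mem hb ha)),
    b * b, Submodule.mem_sup_right (Submodule.mul_mem_mul hb hb), mul_ne_zero hb0 hb0, ?_⟩
  rw [D.leibniz_div, smul_eq_mul, smul_eq_mul, smul_eq_mul]
  field_simp

theorem image_logDerivative (hS : IsBoundedHeight k S) (D : Derivation k L L) :
    IsBoundedHeight k (logDerivative D '' S) := by
  refine ((hS.image_derivation D).div hS).mono ?_
  rintro _ ⟨f, hf, rfl⟩
  exact Set.div_mem_div (Set.mem_image_of_mem D hf) hf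

variable (k) in
theorem range_eval_natCast (p : L[X]) :
    IsBoundedHeight k (Set.range fun n : ℕ ↦ p.eval (n : L)) := by
  refine (of_fg (Submodule.fg_span (R := k) p.coeffs.finite_toSet)).mono ?_
  rintro _ ⟨n, rfl⟩
  simp only [eval_eq_sum, Polynomial.sum]
  refine Submodule.sum_mem _ fun i hi ↦ ?_
  rw [← Nat.cast_pow, mul_comm, ← nsmul_eq_mul]
  exact Submodule.smul_of_tower_mem _ _
    (Submodule.subset_span (coeff_mem_coeffs (mem_support_iff.1 hi)))

end IsBoundedHeight

variable [LinearOrderedCommGroupWithZero Γ] (v : Valuation L Γ) [v.IsTrivialOn k]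

theorem linearIndependent_of_injective_valuation {ι : Type*} {f : ι → L} (hf : ∀ i, f i ≠ 0)
    (hinj : Function.Injective (v ∘ f)) : LinearIndependent k f := by
  classical
  rw [linearIndependent_iff']
  intro s c hc
  by_contra! h
  have hval {i : ι} (hi : c i ≠ 0) : v (c i • f i) = v (f i) := by
    rw [Algebra.smul_def, map_mul, Valuation.IsTrivialOn.eq_one (v := v) _ hi, one_mul]
  obtain ⟨j, hj, hmax⟩ := Finset.exists_max_image {i ∈ s | c i ≠ 0} (v ∘ f)
    (Finset.filter_nonempty_iff.2 h)
  have hsum : v (∑ i ∈ s with c i ≠ 0, c i • f i) = v (c j • f j) := by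
    refine v.map_sum_eq_of_lt hj fun i hi ↦ ?_
    obtain ⟨hi, hij⟩ := Finset.mem_sdiff.1 hi
    rw [hval (Finset.mem_filter.1 hi).2, hval (Finset.mem_filter.1 hj).2]
    exact (hmax i hi).lt_of_ne (hinj.ne (Finset.notMem_singleton.1 hij))
  rw [Finset.sum_filter_of_ne fun i _ ↦ left_ne_zero_of_smul, hc, map_zero,
    hval (Finset.mem_filter.1 hj).2] at hsum
  exact (v.ne_zero_iff).2 (hf j) hsum.symm

theorem finite_image_valuation_of_fg {V : Submodule k L} (hV : V.FG) :
    (v '' (V : Set L)).Finite := by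
  have : Module.Finite k V := .of_fg hV
  refine Set.Finite.of_sdiff ?_ (Set.finite_singleton 0)
  choose f hfV hfv using fun γ : ↥(v '' (V : Set L) \ {0}) ↦ γ.2.1
  have hf0 (γ) : f γ ≠ 0 := (v.ne_zero_iff).1 ((hfv γ).trans_ne γ.2.2)
  have hli : LinearIndependent k f := linearIndependent_of_injective_valuation v hf0 fun γ δ h ↦
    Subtype.ext <| (hfv γ).symm.trans (h.trans (hfv δ))
  have hliV : LinearIndependent k fun γ ↦ (⟨f γ, hfV γ⟩ : V) := .of_comp V.subtype hli
  exact @Set.toFinite _ _ hliV.finite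

namespace IsBoundedHeight

variable {S : Set L}

theorem finite_image_valuation (hS : IsBoundedHeight k S) : (v '' S).Finite := by
  obtain ⟨V, hV, hS⟩ := hS
  have hfin := finite_image_valuation_of_fg v hV
  refine (hfin.div hfin).subset ?_
  rintro _ ⟨f, hf, rfl⟩
  obtain ⟨a, ha, b, hb, -, rfl⟩ := hS f hf
  exact map_div₀ v a b ▸ Set.div_mem_div (Set.mem_image_of_mem v ha) (Set.mem_image_of_mem v hb)

theorem exists_forall_valuation_le (hS : IsBoundedHeight k S) : ∃ C ≠ 0, ∀ f ∈ S, v f ≤ C := by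
  obtain ⟨C, hC⟩ := (hS.finite_image_valuation v).bddAbove
  exact ⟨1 ⊔ C, (zero_lt_one.trans_le le_sup_left).ne',
    fun f hf ↦ (hC (Set.mem_image_of_mem v hf)).trans le_sup_right⟩

theorem exists_forall_le_valuation (hS : IsBoundedHeight k S) :
    ∃ C ≠ 0, ∀ f ∈ S, f ≠ 0 → C ≤ v f := by
  obtain ⟨C, hC0, hC⟩ := hS.inv.exists_forall_valuation_le v
  refine ⟨C⁻¹, inv_ne_zero hC0, fun f hf hf0 ↦ ?_⟩
  have hle := hC f⁻¹ (Set.inv_mem_inv.2 hf)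
  rw [map_inv₀] at hle
  exact inv_le_of_inv_le₀ (zero_lt_iff.2 ((v.ne_zero_iff).2 hf0)) hle

end IsBoundedHeight

end BoundedHeight

theorem finrank_ker_lt_finrank {R M N : Type*} [CommRing R] [IsDomain R] [AddCommGroup M]
    [Module R M] [Module.Finite R M] [AddCommGroup N] [Module R N] [Module.IsTorsionFree R N]
    {f : M →ₗ[R] N} (hf : f ≠ 0) : Module.finrank R f.ker < Module.finrank R M := by
  obtain ⟨x, hx⟩ := DFunLike.ne_iff.1 hf
  have hrange : Module.finrank R f.range ≠ 0 := fun h ↦ by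
    obtain ⟨r, hr, hrx⟩ := Module.finrank_eq_zero_iff.1 h ⟨f x, x, rfl⟩
    exact smul_ne_zero hr hx (congrArg Subtype.val hrx)
  rw [← f.ker.finrank_quotient_add_finrank, f.quotKerEquivRange.finrank_eq]
  lia

section Characters

variable {k L : Type*} [Field k] [Field L] [Algebra k L]

theorem exists_valuationSubring_isTrivialOn_one_lt {γ : L} (hγ : Transcendental k γ) :
    ∃ A : ValuationSubring L, A.valuation.IsTrivialOn k ∧ 1 < A.valuation γ := by
  have : IsIntegrallyClosedIn (integralClosure k L).toSubring L :=
    inferInstanceAs (IsIntegrallyClosedIn (integralClosure k L) L)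
  obtain ⟨A, hA, hγA⟩ := Subring.exists_le_valuationSubring_of_isIntegrallyClosedIn
    (R := (integralClosure k L).toSubring) fun h ↦ hγ (IsIntegral.isAlgebraic h)
  refine ⟨A, .of_le_one _ fun c ↦ ?_, not_le.1 fun h ↦ hγA ((A.valuation_le_one_iff γ).1 h)⟩
  exact (A.valuation_le_one_iff _).2 (hA ((integralClosure k L).algebraMap_mem c))

-- A valuation takes finitely many values on `S`, so up to finitely many translations we may pass
-- to the kernel of a nontrivial `v ∘ φ`, which has smaller rank.
theorem IsBoundedHeight.finite_setOf_map_mem {S : Set L} (hS : IsBoundedHeight k S) {M : Type*}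
    [AddCommGroup M] [Module.Finite ℤ M] (φ : Multiplicative M →* Lˣ)
    (hφ : ∀ x : M, x ≠ 0 → Transcendental k (φ (.ofAdd x) : L)) :
    {x : M | (φ (.ofAdd x) : L) ∈ S}.Finite := by
  induction hr : Module.finrank ℤ M using Nat.strong_induction_on generalizing M S with
  | _ r ih =>
  subst hr
  obtain _ | _ := subsingleton_or_nontrivial M
  · exact Set.toFinite _
  obtain ⟨y, hy⟩ := exists_ne (0 : M)
  obtain ⟨A, _, hA⟩ := exists_valuationSubring_isTrivialOn_one_lt (hφ y hy)
  let v (x : M) := A.valuation (φ (.ofAdd x))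
  let ψ : M →ₗ[ℤ] Additive A.ValueGroupˣ :=
    (MonoidHom.toAdditiveRight ((Units.map A.valuation).comp φ)).toIntLinearMap
  have ψ_eq_zero_iff {x : M} : ψ x = 0 ↔ v x = 1 := Units.ext_iff
  have hψ : ψ ≠ 0 := DFunLike.ne_iff.2 ⟨y, ψ_eq_zero_iff.not.2 hA.ne'⟩
  refine .of_finite_fibers v ((hS.finite_image_valuation A.valuation).subset ?_) ?_
  · rintro _ ⟨x, hx, rfl⟩
    exact Set.mem_image_of_mem _ hx
  · rintro _ ⟨x, -, rfl⟩
    have hfin := ih _ (finrank_ker_lt_finrank hψ)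
      (hS.div (.of_finite k (Set.finite_singleton (φ (.ofAdd x) : L))))
      (φ.comp ψ.ker.subtype.toAddMonoidHom.toMultiplicative)
      (fun z hz ↦ hφ z (Subtype.coe_ne_coe.2 hz)) rfl
    refine (hfin.image fun z : ψ.ker ↦ (z + x : M)).subset fun z ⟨hz, hzx⟩ ↦
      ⟨⟨z - x, ψ_eq_zero_iff.2 ?_⟩, ?_, sub_add_cancel z x⟩
    · simp only [v, ofAdd_sub, _root_.map_div, Units.val_div_eq_div_val, map_div₀]
      exact div_eq_one_iff_eq ((A.valuation.ne_zero_iff).2 (Units.ne_zero _)) |>.2 hzx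
    · exact ⟨_, hz, _, rfl, by simp⟩

theorem IsBoundedHeight.finite_setOf_zpow_mul_zpow_mem {S : Set L} (hS : IsBoundedHeight k S)
    {α β : L} (hα : α ≠ 0) (hβ : β ≠ 0)
    (h : ∀ r s : ℤ, IsAlgebraic k (α ^ r * β ^ s) → r = 0 ∧ s = 0) :
    {x : ℤ × ℤ | α ^ x.1 * β ^ x.2 ∈ S}.Finite := by
  let φ : Multiplicative (ℤ × ℤ) →* Lˣ :=
    .mk' (fun x ↦ Units.mk0 α hα ^ x.toAdd.1 * Units.mk0 β hβ ^ x.toAdd.2) fun x y ↦ by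
      simp only [toAdd_mul, Prod.fst_add, Prod.snd_add, zpow_add, mul_mul_mul_comm]
  have hval (x : ℤ × ℤ) : (φ (.ofAdd x) : L) = α ^ x.1 * β ^ x.2 := by simp [φ]
  simp only [← hval]
  exact hS.finite_setOf_map_mem φ fun x hx halg ↦ hx (Prod.ext_iff.2 (h x.1 x.2 (hval x ▸ halg)))

theorem IsBoundedHeight.finite_setOf_pow_mem {S : Set L} (hS : IsBoundedHeight k S) {γ : L}
    (hγ : Transcendental k γ) : {n : ℕ | γ ^ n ∈ S}.Finite := by
  obtain ⟨A, _, hA⟩ := exists_valuationSubring_isTrivialOn_one_lt hγ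
  refine .of_finite_image ((hS.finite_image_valuation A.valuation).subset ?_)
    (pow_right_strictMono₀ hA).injective.injOn
  rintro _ ⟨n, hn, rfl⟩
  exact ⟨γ ^ n, hn, map_pow A.valuation γ n⟩

end Characters

section Dominance

open scoped Pointwise

variable {k L Γ : Type*} [Field k] [Field L] [Algebra k L] [LinearOrderedCommGroupWithZero Γ]
  {D : Derivation k L L} {v : Valuation L Γ}

theorem logDerivative_derivation_div_mem {S : Set L} {f g : L} (hg0 : g ≠ 0)
    (hf : logDerivative D f ∈ S) (hg : logDerivative D g ∈ S) :
    logDerivative D (D (f / g)) ∈ (S - S + logDerivative D '' (S - S)) ∪ {0} := by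
  obtain hD | hD := eq_or_ne (D (f / g)) 0
  · exact .inr (by simp [hD, logDerivative])
  have hf0 : f ≠ 0 := by rintro rfl; simp at hD
  rw [logDerivative_derivation D hD, logDerivative_div D hf0 hg0]
  exact .inl <|
    Set.add_mem_add (Set.sub_mem_sub hf hg) (Set.mem_image_of_mem _ (Set.sub_mem_sub hf hg))

theorem derivation_add_sum_insert_div {ι : Type*} [DecidableEq ι] {s : Finset ι} {j : ι}
    (hj : j ∉ s) (f : L) {u : ι → L} (hj0 : u j ≠ 0) :
    D ((f + ∑ i ∈ insert j s, u i) / u j) = D (f / u j) + ∑ i ∈ s, D (u i / u j) := by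
  rw [Finset.sum_insert hj, add_div, add_div, div_self hj0, Finset.sum_div, map_add, map_add,
    map_sum, D.map_one_eq_zero, zero_add]

theorem div_mem_of_derivation_div_div_mem {S T : Set L} {f₀ f g : L} (hg0 : g ≠ 0)
    (hf₀ : logDerivative D f₀ ∈ S) (hf : logDerivative D f ∈ S) (hg : logDerivative D g ∈ S)
    (hD₀ : D (f₀ / g) ≠ 0) (hD : D (f / g) ≠ 0) (hT : D (f₀ / g) / D (f / g) ∈ T) :
    f₀ / f ∈ T * ((S - S) / (S - S)) := by
  have hf₀0 : f₀ ≠ 0 := by rintro rfl; simp at hD₀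
  have hf0 : f ≠ 0 := by rintro rfl; simp at hD
  refine ⟨_, hT, _, Set.div_mem_div (Set.sub_mem_sub hf hg) (Set.sub_mem_sub hf₀ hg), ?_⟩
  rw [derivation_div D hf₀0 hg0] at hD₀ ⊢
  rw [derivation_div D hf0 hg0] at hD ⊢
  have := right_ne_zero_of_mul hD₀
  have := right_ne_zero_of_mul hD
  simp only
  field_simp

theorem mul_valuation_le_of_mul_valuation_derivation_div_le (hvD : ∀ f, v (D f) ≤ v f)
    {f g w : L} (hf : f ≠ 0) (hg : g ≠ 0) {B C : Γ}
    (hB : B ≤ v (logDerivative D f - logDerivative D g))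
    (hC : C * v (D (f / g)) ≤ v (D (w / g))) : C * B * v f ≤ v w := by
  have hvg : 0 < v g := zero_lt_iff.2 ((v.ne_zero_iff).2 hg)
  refine (div_le_div_iff_of_pos_right hvg).1 ?_
  calc C * B * v f / v g = C * (v f / v g * B) := by
        rw [mul_div_assoc, mul_assoc, mul_comm B]
    _ ≤ C * (v f / v g * v (logDerivative D f - logDerivative D g)) := by gcongr
    _ = C * v (D (f / g)) := by rw [derivation_div D hf hg, map_mul, map_div₀]
    _ ≤ v (w / g) := hC.trans (hvD _)
    _ = v w / v g := map_div₀ v w g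

theorem exists_forall_div_mem_or_mul_valuation_le [v.IsTrivialOn k]
    (hD : IsBoundedHeight k {f | D f = 0}) (hvD : ∀ f, v (D f) ≤ v f)
    {ι : Type*} (s : Finset ι) {S : Set L} (hS : IsBoundedHeight k S) :
    ∃ T, IsBoundedHeight k T ∧ ∃ C ≠ 0, ∀ (f : L) (u : ι → L), logDerivative D f ∈ S →
      (∀ i ∈ s, logDerivative D (u i) ∈ S) →
        (∃ i ∈ s, u i ≠ 0 ∧ f / u i ∈ T) ∨ C * v f ≤ v (f + ∑ i ∈ s, u i) := by
  classical
  induction s using Finset.induction_on generalizing S with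
  | empty => exact ⟨∅, .of_finite k Set.finite_empty, 1, one_ne_zero, fun f u _ _ ↦ by simp⟩
  | insert j s hj ih =>
  have hSS := hS.sub hS
  obtain ⟨T₁, hT₁, C₁, hC₁, h₁⟩ := ih hS
  obtain ⟨T₂, hT₂, C₂, hC₂, h₂⟩ := ih
    ((hSS.add (hSS.image_logDerivative D)).union (.of_finite k (Set.finite_singleton 0)))
  obtain ⟨B, hB0, hB⟩ := hSS.exists_forall_le_valuation v
  refine ⟨{f | D f = 0} ∪ T₁ ∪ T₂ * ((S - S) / (S - S)),
    (hD.union hT₁).union (hT₂.mul (hSS.div hSS)), C₁ ⊓ C₂ * B,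
    (lt_min (zero_lt_iff.2 hC₁) (zero_lt_iff.2 (mul_ne_zero hC₂ hB0))).ne', fun f u hf hu ↦ ?_⟩
  obtain ⟨huj, hus⟩ := Finset.forall_mem_insert _ _ _ |>.1 hu
  obtain hj0 | hj0 := eq_or_ne (u j) 0
  · rw [Finset.sum_insert hj, hj0, zero_add]
    obtain ⟨i, hi, hi0, hiT⟩ | h := h₁ f u hf hus
    · exact .inl ⟨i, Finset.mem_insert_of_mem hi, hi0, .inl (.inr hiT)⟩
    · exact .inr ((mul_le_mul_left inf_le_left _).trans h)
  obtain hD₀ | hD₀ := eq_or_ne (D (f / u j)) 0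
  · exact .inl ⟨j, Finset.mem_insert_self j s, hj0, .inl (.inl hD₀)⟩
  obtain ⟨i, hi, hi0, hiT⟩ | h :=
    h₂ _ (fun i ↦ D (u i / u j)) (logDerivative_derivation_div_mem hj0 hf huj)
      fun i hi ↦ logDerivative_derivation_div_mem hj0 (hus i hi) huj
  · have hui : u i ≠ 0 := by rintro h; simp [h] at hi0
    exact .inl ⟨i, Finset.mem_insert_of_mem hi, hui,
      .inr (div_mem_of_derivation_div_div_mem hj0 hf (hus i hi) huj hD₀ hi0 hiT)⟩
  · have hf0 : f ≠ 0 := by rintro rfl; simp at hD₀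
    have hlog := right_ne_zero_of_mul (derivation_div D hf0 hj0 ▸ hD₀)
    exact .inr <| (mul_le_mul_left inf_le_right _).trans <|
      mul_valuation_le_of_mul_valuation_derivation_div_le hvD hf0 hj0
        (hB _ (Set.sub_mem_sub hf huj) hlog) (derivation_add_sum_insert_div (D := D) hj f hj0 ▸ h)

end Dominance

section ConstantField

variable {k L : Type*} [Field k] [Field L] [Algebra k L] [Algebra (RatFunc k) L]
  [IsScalarTower k (RatFunc k) L] [FunctionField k L]

attribute [local instance] Polynomial.algebra

theorem finiteDimensional_algebraicClosure : FiniteDimensional k (algebraicClosure k L) := by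
  let E := algebraicClosure k L
  let x : L := algebraMap (RatFunc k) L RatFunc.X
  have hx : Transcendental k x :=
    (transcendental_algebraMap_iff (algebraMap (RatFunc k) L).injective).2 RatFunc.transcendental_X
  let _ : Algebra k[X] L := (aeval x).toAlgebra
  let _ : Algebra E[X] L := (aeval x).toAlgebra
  have : FaithfulSMul k[X] L :=
    (faithfulSMul_iff_algebraMap_injective ..).2 (transcendental_iff_injective.1 hx)
  have : FaithfulSMul E[X] L := (faithfulSMul_iff_algebraMap_injective ..).2
    (transcendental_iff_injective.1 hx.algebraicClosure)
  have : IsScalarTower k[X] (RatFunc k) L := .of_algebraMap_eq fun p ↦ by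
    rw [← RatFunc.aeval_X_left_eq_algebraMap]
    exact aeval_algebraMap_apply L RatFunc.X p
  have : IsScalarTower k[X] E[X] L :=
    .of_algebraMap_eq fun p ↦ (aeval_map_algebraMap E x p).symm
  have := (@functionField_iff k L _ _ (RatFunc k) _ _ _
    (RatFunc.liftAlgebra k L) _ _ _ (RatFunc.isScalarTower_liftAlgebra k L)).2 ‹FunctionField k L›
  exact FunctionField.finiteDimensional_of_constantExtension L

theorem isBoundedHeight_setOf_isAlgebraic : IsBoundedHeight k {f : L | IsAlgebraic k f} :=
  have := finiteDimensional_algebraicClosure (k := k) (L := L)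
  (IsBoundedHeight.of_fg (V := (algebraicClosure k L).toSubmodule)
    (Module.Finite.iff_fg.1 this)).mono fun _ ↦ mem_algebraicClosure_iff.2

end ConstantField

section RecurrenceSequences

open Filter
open scoped Pointwise

variable {k L Γ : Type*} [Field k] [Field L] [Algebra k L] [LinearOrderedCommGroupWithZero Γ]
  {D : Derivation k L L} {v : Valuation L Γ}

theorem IsBoundedHeight.range_logDerivative_eval_mul_pow (D : Derivation k L L) (p : L[X]) {α : L}
    (hα : α ≠ 0) :
    IsBoundedHeight k (Set.range fun n : ℕ ↦ logDerivative D (p.eval (n : L) * α ^ n)) := by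
  refine ((((range_eval_natCast k p).image_logDerivative D).add
    (range_eval_natCast k (X * C (logDerivative D α)))).union
      (.of_finite k (Set.finite_singleton 0))).mono ?_
  rintro _ ⟨n, rfl⟩
  obtain hp | hp := eq_or_ne (p.eval (n : L)) 0
  · exact .inr (by simp [hp, logDerivative])
  · refine .inl ⟨_, Set.mem_image_of_mem _ ⟨n, rfl⟩, _, ⟨n, rfl⟩, ?_⟩
    have hpow := logDerivative_zpow D hα n
    rw [zpow_natCast, Int.cast_natCast] at hpow
    simp only [eval_mul, eval_X, eval_C, ← hpow, logDerivative_mul D hp (pow_ne_zero n hα)]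

theorem exists_eventually_mul_valuation_le [v.IsTrivialOn k]
    (hD : IsBoundedHeight k {f | D f = 0}) (hvD : ∀ f, v (D f) ≤ v f) {ι P : Type*} [Fintype ι]
    {l : Filter P} {f : P → L} {u : ι → P → L}
    (hf : IsBoundedHeight k (Set.range fun x ↦ logDerivative D (f x)))
    (hu : ∀ i, IsBoundedHeight k (Set.range fun x ↦ logDerivative D (u i x)))
    (hfu : ∀ i T, IsBoundedHeight k T → ∀ᶠ x in l, f x ≠ 0 → u i x ≠ 0 → f x / u i x ∉ T) :
    ∃ C ≠ 0, ∀ᶠ x in l, C * v (f x) ≤ v (f x + ∑ i, u i x) := by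
  obtain ⟨T, hT, C, hC0, hC⟩ :=
    exists_forall_div_mem_or_mul_valuation_le (v := v) hD hvD (Finset.univ : Finset ι)
      (hf.union (.iUnion hu))
  refine ⟨C, hC0, (eventually_all.2 fun i ↦ hfu i T hT).mono fun x hx ↦ ?_⟩
  obtain hf0 | hf0 := eq_or_ne (f x) 0
  · simp only [hf0, map_zero, mul_zero, zero_le]
  obtain ⟨i, -, hi0, hi⟩ | h := hC (f x) (u · x) (.inl ⟨x, rfl⟩)
    fun i _ ↦ .inr (Set.mem_iUnion.2 ⟨i, x, rfl⟩)
  · exact absurd hi (hx i hf0 hi0)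
  · exact h

theorem div_mem_of_mul_div_mul_mem {P Q T : Set L} {a b p q : L} (hp : p ∈ P) (hq : q ∈ Q)
    (hp0 : p ≠ 0) (hq0 : q ≠ 0) (h : p * a / (q * b) ∈ T) : a / b ∈ T * (Q / P) := by
  refine ⟨_, h, _, Set.div_mem_div hq hp, ?_⟩
  simp only
  field_simp

theorem eventually_eval_mul_pow_div_notMem (p q : L[X]) {α β : L}
    (hαβ : Transcendental k (α / β)) {T : Set L} (hT : IsBoundedHeight k T) :
    ∀ᶠ n : ℕ in cofinite, p.eval (n : L) * α ^ n ≠ 0 → q.eval (n : L) * β ^ n ≠ 0 →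
      p.eval (n : L) * α ^ n / (q.eval (n : L) * β ^ n) ∉ T := by
  refine (((hT.mul ((IsBoundedHeight.range_eval_natCast k q).div
    (.range_eval_natCast k p))).finite_setOf_pow_mem hαβ).eventually_cofinite_notMem).mono
      fun n hn hp hq h ↦ hn ?_
  rw [Set.mem_ofPred_eq, div_pow]
  exact div_mem_of_mul_div_mul_mem ⟨n, rfl⟩ ⟨n, rfl⟩ (left_ne_zero_of_mul hp)
    (left_ne_zero_of_mul hq) h

theorem eventually_eval_mul_pow_div_eval_mul_pow_notMem (p q : L[X]) {α β : L}
    (hα : α ≠ 0) (hβ : β ≠ 0) (h : ∀ r s : ℤ, IsAlgebraic k (α ^ r * β ^ s) → r = 0 ∧ s = 0)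
    {T : Set L} (hT : IsBoundedHeight k T) :
    ∀ᶠ x : ℕ × ℕ in cofinite,
      p.eval (x.1 : L) * α ^ x.1 ≠ 0 → q.eval (x.2 : L) * β ^ x.2 ≠ 0 →
        p.eval (x.1 : L) * α ^ x.1 / (q.eval (x.2 : L) * β ^ x.2) ∉ T := by
  have hinj : Function.Injective fun x : ℕ × ℕ ↦ ((x.1 : ℤ), -(x.2 : ℤ)) := fun x y hxy ↦ by
    simpa [Prod.ext_iff] using hxy
  refine ((((hT.mul ((IsBoundedHeight.range_eval_natCast k q).div
    (.range_eval_natCast k p))).finite_setOf_zpow_mul_zpow_mem hα hβ h).preimage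
      hinj.injOn).eventually_cofinite_notMem).mono fun x hx hp hq h ↦ hx ?_
  rw [Set.mem_preimage, Set.mem_ofPred_eq, zpow_natCast, zpow_neg, zpow_natCast, ← div_eq_mul_inv]
  exact div_mem_of_mul_div_mul_mem ⟨x.1, rfl⟩ ⟨x.2, rfl⟩ (left_ne_zero_of_mul hp)
    (left_ne_zero_of_mul hq) h

/-- The linear recurrence sequence `n ↦ ∑ i, A i (n) * α i ^ n` with characteristic roots `α i` and
polynomial coefficients `A i`. -/
def linearRecurrenceSeq {ι : Type*} [Fintype ι] (A : ι → L[X]) (α : ι → L) (n : ℕ) : L :=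
  ∑ i, (A i).eval (n : L) * α i ^ n

variable {ι κ : Type*} [Fintype ι] [Fintype κ] {A : ι → L[X]} {α : ι → L} {B : κ → L[X]}
  {β : κ → L} {i₀ : ι}

theorem mul_linearRecurrenceSeq (a : L) (n : ℕ) :
    a * linearRecurrenceSeq A α n = linearRecurrenceSeq (fun i ↦ C a * A i) α n := by
  simp only [linearRecurrenceSeq, Finset.mul_sum, eval_mul, eval_C, mul_assoc]

theorem eventually_eval_natCast_ne_zero [CharZero L] {p : L[X]} (hp : p ≠ 0) :
    ∀ᶠ n : ℕ in cofinite, p.eval (n : L) ≠ 0 :=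
  ((p.finite_setOfPred_isRoot hp).preimage Nat.cast_injective.injOn).eventually_cofinite_notMem

theorem exists_eventually_mul_valuation_linearRecurrenceSeq_le (k : Type*) [Field k] [CharZero k]
    [Algebra k L] (v : Valuation L Γ) [v.IsTrivialOn k] (hA : A i₀ ≠ 0)
    (hmax : ∀ i, v (α i) ≤ v (α i₀)) :
    ∃ C ≠ 0, ∀ᶠ n : ℕ in cofinite,
      C * v (linearRecurrenceSeq A α n) ≤ v ((A i₀).eval (n : L) * α i₀ ^ n) := by
  have : CharZero L := charZero_of_injective_algebraMap (algebraMap k L).injective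
  obtain ⟨C₁, hC₁0, hC₁⟩ := (IsBoundedHeight.iUnion fun i ↦
    IsBoundedHeight.range_eval_natCast k (A i)).exists_forall_valuation_le v
  obtain ⟨C₂, hC₂0, hC₂⟩ :=
    (IsBoundedHeight.range_eval_natCast k (A i₀)).exists_forall_le_valuation v
  refine ⟨C₂ * C₁⁻¹, mul_ne_zero hC₂0 (inv_ne_zero hC₁0),
    (eventually_eval_natCast_ne_zero hA).mono fun n hn ↦ ?_⟩
  have hle : v (linearRecurrenceSeq A α n) ≤ C₁ * v (α i₀) ^ n := v.map_sum_le fun i _ ↦ by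
    rw [map_mul, map_pow]
    exact mul_le_mul' (hC₁ _ (Set.mem_iUnion.2 ⟨i, n, rfl⟩)) (pow_le_pow_left' (hmax i) n)
  calc C₂ * C₁⁻¹ * v (linearRecurrenceSeq A α n) ≤ C₂ * C₁⁻¹ * (C₁ * v (α i₀) ^ n) := by gcongr
    _ = C₂ * v (α i₀) ^ n := by rw [mul_assoc, inv_mul_cancel_left₀ hC₁0]
    _ ≤ v ((A i₀).eval (n : L)) * v (α i₀) ^ n := by
      gcongr
      exact hC₂ _ ⟨n, rfl⟩ hn
    _ = v ((A i₀).eval (n : L) * α i₀ ^ n) := by rw [map_mul, map_pow]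

theorem exists_eventually_forall_mul_valuation_term_le [v.IsTrivialOn k]
    (hD : IsBoundedHeight k {f | D f = 0}) (hvD : ∀ f, v (D f) ≤ v f) (hα : ∀ i, α i ≠ 0)
    (hβ : ∀ j, β j ≠ 0) (hnd : ∀ i ≠ i₀, Transcendental k (α i₀ / α i))
    (hind : ∀ j, ∀ r s : ℤ, IsAlgebraic k (α i₀ ^ r * β j ^ s) → r = 0 ∧ s = 0) :
    ∃ C ≠ 0, ∀ᶠ n : ℕ in cofinite, ∀ m, C * v ((A i₀).eval (n : L) * α i₀ ^ n) ≤
      v (linearRecurrenceSeq A α n + linearRecurrenceSeq B β m) := by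
  classical
  obtain ⟨C, hC0, hC⟩ := exists_eventually_mul_valuation_le (v := v) hD hvD
    (ι := {i // i ≠ i₀} ⊕ κ) (l := comap Prod.fst cofinite)
    (f := fun x : ℕ × ℕ ↦ (A i₀).eval (x.1 : L) * α i₀ ^ x.1)
    (u := Sum.elim (fun i x ↦ (A i).eval (x.1 : L) * α i ^ x.1)
      fun j x ↦ (B j).eval (x.2 : L) * β j ^ x.2)
    ((IsBoundedHeight.range_logDerivative_eval_mul_pow D (A i₀) (hα i₀)).mono
      (Set.range_subset_iff.2 fun x ↦ ⟨x.1, rfl⟩))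
    (by
      rintro (i | j)
      · exact (IsBoundedHeight.range_logDerivative_eval_mul_pow D (A i) (hα i)).mono
          (Set.range_subset_iff.2 fun x ↦ ⟨x.1, rfl⟩)
      · exact (IsBoundedHeight.range_logDerivative_eval_mul_pow D (B j) (hβ j)).mono
          (Set.range_subset_iff.2 fun x ↦ ⟨x.2, rfl⟩))
    (by
      rintro (i | j) T hT
      · exact (eventually_eval_mul_pow_div_notMem (A i₀) (A i) (hnd i i.2) hT).comap Prod.fst
      · exact (eventually_eval_mul_pow_div_eval_mul_pow_notMem (A i₀) (B j) (hα i₀) (hβ j)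
          (hind j) hT).filter_mono (comap_cofinite_le Prod.fst))
  refine ⟨C, hC0, (eventually_comap.1 hC).mono fun n hn m ↦ (hn (n, m) rfl).trans_eq ?_⟩
  simp only [Fintype.sum_sum_type, Sum.elim_inl, Sum.elim_inr, linearRecurrenceSeq, ← add_assoc]
  congr 2
  exact (Fintype.sum_eq_add_sum_subtype_ne (fun i ↦ (A i).eval (n : L) * α i ^ n) i₀).symm

theorem exists_eventually_mul_valuation_add_linearRecurrenceSeq_le [v.IsTrivialOn k]
    (hD : IsBoundedHeight k {f | D f = 0}) (hvD : ∀ f, v (D f) ≤ v f)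
    (hβ : ∀ j, Transcendental k (β j)) (g : L) :
    ∃ C ≠ 0, ∀ᶠ m : ℕ in cofinite, C * v g ≤ v (g + linearRecurrenceSeq B β m) := by
  have hβ0 (j : κ) : β j ≠ 0 := fun h ↦ hβ j (h ▸ isAlgebraic_zero)
  refine exists_eventually_mul_valuation_le (f := fun _ : ℕ ↦ g)
    (u := fun j m ↦ (B j).eval (m : L) * β j ^ m) hD hvD (.of_finite k (Set.finite_range_const))
    (fun j ↦ .range_logDerivative_eval_mul_pow D (B j) (hβ0 j)) fun j T hT ↦ ?_
  have hβinv : Transcendental k (1 / β j) := by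
    rw [one_div]
    exact fun h ↦ hβ j (IsAlgebraic.inv_iff.1 h)
  simpa using eventually_eval_mul_pow_div_notMem (C g) (B j) hβinv hT

theorem exists_forall_lt_max_mul_le {f : ℕ → Γ} {g : ℕ → ℕ → Γ}
    (hn : ∃ C ≠ 0, ∀ᶠ n in cofinite, ∀ m, C * f n ≤ g n m)
    (hm : ∀ n, ∃ C ≠ 0, ∀ᶠ m in cofinite, C * f n ≤ g n m) :
    ∃ (c : ℕ) (C : Γ), C ≠ 0 ∧ ∀ n m, c < max n m → C * f n ≤ g n m := by
  simp only [Nat.cofinite_eq_atTop] at hn hm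
  obtain ⟨C₀, hC₀0, hC₀⟩ := hn
  choose C hC0 hC using hm
  obtain ⟨N, hN⟩ := eventually_atTop.1 hC₀
  obtain ⟨M, hM⟩ := eventually_atTop.1
    ((eventually_all_finset (Finset.range (N + 1))).2 fun n _ ↦ hC n)
  obtain ⟨n₀, -, hn₀⟩ := (Finset.range (N + 1)).exists_min_image C (by simp)
  refine ⟨max N M, C₀ ⊓ C n₀, (lt_min (zero_lt_iff.2 hC₀0) (zero_lt_iff.2 (hC0 n₀))).ne',
    fun n m hnm ↦ ?_⟩
  obtain hNn | hnN := le_or_gt N n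
  · exact (mul_le_mul_left inf_le_left _).trans (hN n hNn m)
  · have hn : n ∈ Finset.range (N + 1) := Finset.mem_range.2 (by lia)
    exact (mul_le_mul_left (inf_le_right.trans (hn₀ n hn)) _).trans (hM m (by lia) n hn)

end RecurrenceSequences

section FunctionField

variable {k L Γ : Type*} [Field k] [CharZero k] [Field L] [Algebra k L] [Algebra (RatFunc k) L]
  [IsScalarTower k (RatFunc k) L] [FunctionField k L] [LinearOrderedCommGroupWithZero Γ]
  {ι κ : Type*} [Fintype ι] [Fintype κ] {A : ι → L[X]} {α : ι → L} {B : κ → L[X]} {β : κ → L}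
  {i₀ : ι}

theorem exists_forall_lt_max_mul_valuation_le (v : Valuation L Γ) [v.IsTrivialOn k] (hA : A i₀ ≠ 0)
    (hα : ∀ i, α i ≠ 0) (hβ : ∀ j, β j ≠ 0) (hnd : ∀ i ≠ i₀, Transcendental k (α i₀ / α i))
    (hind : ∀ j, ∀ r s : ℤ, IsAlgebraic k (α i₀ ^ r * β j ^ s) → r = 0 ∧ s = 0)
    (hmax : ∀ i, v (α i) ≤ v (α i₀)) :
    ∃ (c : ℕ) (C : Γ), C ≠ 0 ∧ ∀ n m, c < max n m → C * v (linearRecurrenceSeq A α n) ≤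
      v (linearRecurrenceSeq A α n + linearRecurrenceSeq B β m) := by
  obtain ⟨D, hD, hvD⟩ := exists_derivation_isAlgebraic_of_eq_zero_valuation_le (k := k) v
  have hDk : IsBoundedHeight k {f | D f = 0} := isBoundedHeight_setOf_isAlgebraic.mono hD
  have hβt (j : κ) : Transcendental k (β j) := fun h ↦
    one_ne_zero (hind j 0 1 (by simpa using h)).2
  obtain ⟨C₁, hC₁0, hC₁⟩ := exists_eventually_mul_valuation_linearRecurrenceSeq_le k v hA hmax
  obtain ⟨C₂, hC₂0, hC₂⟩ :=
    exists_eventually_forall_mul_valuation_term_le (A := A) (B := B) hDk hvD hα hβ hnd hind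
  refine exists_forall_lt_max_mul_le ⟨C₂ * C₁, mul_ne_zero hC₂0 hC₁0, ?_⟩ fun n ↦
    exists_eventually_mul_valuation_add_linearRecurrenceSeq_le hDk hvD hβt _
  filter_upwards [hC₁, hC₂] with n h₁ h₂ m
  rw [mul_assoc]
  exact (mul_le_mul_right h₁ C₂).trans (h₂ m)

end FunctionField

namespace FFValuation

variable {F : Type*} [Field F] [Algebra ℂ F] (μ : FFValuation F)

/-- The multiplicative valuation attached to an additive one. Its value group carries the reversed
order, so that `μ.toValuation f ≤ μ.toValuation g` means `μ.v g ≤ μ.v f`. -/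
def toValuation : Valuation F (Multiplicative (WithTop ℤ)ᵒᵈ) :=
  AddValuation.toValuation <| .of μ.v μ.v_zero
    (map_one (algebraMap ℂ F) ▸ μ.v_const 1 one_ne_zero) μ.v_add μ.v_mul

instance : μ.toValuation.IsTrivialOn ℂ where
  eq_one := μ.v_const

theorem exists_forall_v_le_add {C : Multiplicative (WithTop ℤ)ᵒᵈ} (hC : C ≠ 0) :
    ∃ K : ℤ, ∀ f g, C * μ.toValuation f ≤ μ.toValuation g → μ.v g ≤ μ.v f + K := by
  obtain ⟨K, rfl⟩ : ∃ K : ℤ, Multiplicative.ofAdd (OrderDual.toDual (K : WithTop ℤ)) = C :=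
    WithTop.ne_top_iff_exists.1 hC
  exact ⟨K, fun f g h ↦ add_comm (μ.v f) K ▸ h⟩

end FFValuation

theorem isConst_iff_isAlgebraic {F : Type*} [Field F] [Algebra ℂ F] {f : F} :
    IsConst F f ↔ IsAlgebraic ℂ f :=
  ⟨fun ⟨c, hc⟩ ↦ hc ▸ isAlgebraic_algebraMap c,
    fun h ↦ minpoly.mem_range_of_degree_eq_one _ _
      (IsAlgClosed.degree_eq_one_of_irreducible _ (minpoly.irreducible h.isIntegral))⟩

end

theorem stmt_1_general {k L Γ : Type*} [Field k] [CharZero k] [Field L] [Algebra k L]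
    [Algebra (RatFunc k) L] [IsScalarTower k (RatFunc k) L] [FunctionField k L]
    [LinearOrderedCommGroupWithZero Γ] (v : Valuation L Γ) [v.IsTrivialOn k]
    {ι κ : Type*} [Fintype ι] [Fintype κ] (α : ι → L) (A : ι → Polynomial L) (β : κ → L)
    (B : κ → Polynomial L) (i₀ : ι) (hα : ∀ i, α i ≠ 0) (hA : A i₀ ≠ 0) (hβ : ∀ j, β j ≠ 0)
    (hnd : ∀ i ≠ i₀, Transcendental k (α i₀ / α i))
    (hind : ∀ j, ∀ r s : ℤ, IsAlgebraic k (α i₀ ^ r * β j ^ s) → r = 0 ∧ s = 0)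
    (hmax : ∀ i, v (α i) ≤ v (α i₀)) {a : L} (ha : a ≠ 0) (b : L) :
    ∃ (c : ℕ) (C : Γ), C ≠ 0 ∧ ∀ n m, c < max n m → C * v (linearRecurrenceSeq A α n) ≤
      v (a * linearRecurrenceSeq A α n - b * linearRecurrenceSeq B β m) := by
  obtain ⟨c, C, hC0, hC⟩ := exists_forall_lt_max_mul_valuation_le v
    (A := fun i ↦ .C a * A i) (B := fun j ↦ .C (-b) * B j)
    (mul_ne_zero (Polynomial.C_ne_zero.2 ha) hA) hα hβ hnd hind hmax
  refine ⟨c, C * v a, mul_ne_zero hC0 ((v.ne_zero_iff).2 ha), fun n m hnm ↦ ?_⟩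
  simpa only [← mul_linearRecurrenceSeq, map_mul, mul_assoc, neg_mul, ← sub_eq_add_neg]
    using hC n m hnm

theorem stmt_1
    (F : Type*) [Field F] [Algebra ℂ F] [Algebra (RatFunc ℂ) F]
    [IsScalarTower ℂ (RatFunc ℂ) F] (hFF : FunctionField ℂ F)
    (d t : ℕ)
    -- the data of the two linear recurrence sequences
    (α : Fin (d + 1) → F) (A : Fin (d + 1) → Polynomial F)
    (β : Fin (t + 1) → F) (B : Fin (t + 1) → Polynomial F)
    (hα0 : ∀ i, α i ≠ 0) (hA0 : ∀ i, A i ≠ 0)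
    (hβ0 : ∀ j, β j ≠ 0) (hB0 : ∀ j, B j ≠ 0)
    (hαinj : Function.Injective α) (hβinj : Function.Injective β)
    -- non-degeneracy
    (hGnd : ∀ i j, i ≠ j → ¬ IsConst F (α i / α j))
    (hHnd : ∀ i j, i ≠ j → ¬ IsConst F (β i / β j))
    -- no `αᵢ` and no `βⱼ` lies in `ℂ`
    (hα1 : ∀ i, ¬ IsConst F (α i)) (hβ1 : ∀ j, ¬ IsConst F (β j))
    -- `(α₁, βⱼ)` multiplicatively independent for all `j`
    (hindep : ∀ j, MultIndep F (α 0) (β j))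
    -- a valuation `μ` with `μ(α₁) ≤ μ(αᵢ)` for all `i`
    (μ : FFValuation F)
    (hμmin : ∀ i, μ.v (α 0) ≤ μ.v (α i))
    (a b : F) (ha : a ≠ 0) (hb : b ≠ 0)
    (G H : ℕ → F)
    (hG : ∀ n : ℕ, G n = ∑ i, (A i).eval (n : F) * α i ^ n)
    (hH : ∀ m : ℕ, H m = ∑ j, (B j).eval (m : F) * β j ^ m) :
    ∃ c₁ : ℕ, ∃ C' : ℤ, ∀ n m : ℕ, c₁ < max n m →
      μ.v (a * G n - b * H m) ≤ μ.v (G n) + (C' : WithTop ℤ) := by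
  obtain ⟨c, C, hC0, hC⟩ := stmt_1_general (k := ℂ) μ.toValuation α A β B 0 hα0 (hA0 0) hβ0
    (fun i hi ↦ isConst_iff_isAlgebraic.not.1 (hGnd 0 i hi.symm))
    (fun j r s h ↦ hindep j r s (isConst_iff_isAlgebraic.2 h)) hμmin ha b
  obtain ⟨K, hK⟩ := μ.exists_forall_v_le_add hC0
  obtain rfl : G = linearRecurrenceSeq A α := funext hG
  obtain rfl : H = linearRecurrenceSeq B β := funext hH
  exact ⟨c, K, fun n m hnm ↦ hK _ _ (hC n m hnm)⟩
end

section
/- Let $G_n = a_1(n)\alpha_1^n + \cdots + a_d(n)\alpha_d^n$ and $H_m = b_1(m)\beta_1^m + \cdots + b_t(m)\beta_t^m$ be two non-degenerate linear recurrence sequences of polynomials in $\mathbb{C}[x]$ whose characteristic roots $\alpha_i, \beta_j$ are polynomials in $\mathbb{C}[x]$. Assume that no $\alpha_i$ and no $\beta_j$ is contained in $\mathbb{C}$, that for every $j \in \{1,\ldots,t\}$ the pair $(\alpha_1, \beta_j)$ is multiplicatively independent, and that $\deg \alpha_1 \ge \deg \alpha_i$ for all $i \in \{1,\ldots,d\}$.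 Fix nonzero $a, b \in \mathbb{C}[x]$. Then there exist effectively computable constants $c_1$ and $C'$, independent of $n$ and $m$, such that for all pairs $(n,m)$ of non-negative integers with $\max\{n,m\} > c_1$ one has $\deg(a G_n - b H_m) \ge \deg G_n - C'$. -/
/-!
STATEMENT 3: The corollary of Theorem 2 for linear recurrence sequences of
polynomials in `ℂ[x]` whose characteristic roots are polynomials as well:
`deg (a Gₙ - b Hₘ) ≥ deg Gₙ - C'` for `max {n, m} > c₁`
(with the convention `deg 0 = -∞`, formalized via `Polynomial.degree` in
`WithBot ℕ` and the equivalent inequality `deg Gₙ ≤ deg (a Gₙ - b Hₘ) + C`).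
-/

/-- A rational function is constant, i.e. lies in `ℂ`. -/
def RatIsConst (f : RatFunc ℂ) : Prop :=
  f ∈ Set.range (RatFunc.C : ℂ →+* RatFunc ℂ)

/-- Two polynomials `p, q ∈ ℂ[x]`, viewed in `ℂ(x)`, are multiplicatively
independent: `p^r q^s ∈ ℂ` forces `r = s = 0`. -/
def PolyMultIndep (p q : Polynomial ℂ) : Prop :=
  ∀ r s : ℤ,
    RatIsConst ((algebraMap (Polynomial ℂ) (RatFunc ℂ) p) ^ r *
      (algebraMap (Polynomial ℂ) (RatFunc ℂ) q) ^ s) → r = 0 ∧ s = 0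

/-!
Write the combination of the two sequences as a sum `∑ qᵢ uᵢ` in which the `uᵢ` are powers of
the characteristic roots and the `qᵢ` have bounded degree. For `R` the product of the roots,
`uᵢ` divides `R uᵢ'` whatever the exponents are, so `R W(q_l u_l, qᵢ uᵢ) = u_l (sᵢ uᵢ)` with
`sᵢ` again of bounded degree. Taking the Wronskian against `q_l u_l` therefore removes the
`l`-th term at a bounded cost in degree, and after finitely many eliminations the sum has degree
at least `deg u_o - K`. The elimination only fails if some Wronskian `W(q_l u_l, q_o u_o)`
vanishes, and then `u_o` and `u_l` are associated up to factors of bounded degree. For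
`u_o = α₁ⁿ` and `u_l = αᵢⁿ` or `u_l = βⱼᵐ`, comparing multiplicities of irreducible factors
shows that non-degeneracy and multiplicative independence leave room for this only when `n` is
bounded. For bounded `n` and large `m`, the terms `Gₙ` stay bounded in degree while `deg Hₘ`
tends to infinity, by the same lower bound applied to `H` alone.
-/

section

open Polynomial UniqueFactorizationMonoid

section MultiplicativeIndependence

/-- Multiplicative independence modulo units, as a condition on natural exponents. For nonconstant
polynomials over a field it is the multiplicative independence of `p` and `q` modulo constants:
a constant `p ^ r * q ^ s` with nonzero exponents forces `r` and `s` to have opposite signs. -/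
def MulIndepUpToUnits {M : Type*} [Monoid M] (p q : M) : Prop :=
  ∀ r s : ℕ, Associated (p ^ r) (q ^ s) → r = 0 ∧ s = 0

lemma MulIndepUpToUnits.not_isUnit_right {M : Type*} [Monoid M] {p q : M}
    (h : MulIndepUpToUnits p q) : ¬ IsUnit q := fun hq =>
  one_ne_zero (h 0 1 (by simpa using (associated_one_iff_isUnit.mpr hq).symm)).2

lemma exists_mul_ne_mul_of_forall_smul_ne {ι : Type*} (f g : ι → ℕ)
    (h : ∀ r s : ℕ, r • f = s • g → r = 0 ∧ s = 0) : ∃ i j, f i * g j ≠ f j * g i := by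
  by_contra! hdep
  have hg : g ≠ 0 := fun hg => one_ne_zero (h 0 1 (by simp [hg])).2
  obtain ⟨i, hi⟩ := Function.ne_iff.mp hg
  refine hi (h (g i) (f i) (funext fun j => ?_)).1
  simpa [mul_comm] using hdep j i

lemma MulIndepUpToUnits.exists_factorization_mul_ne {M : Type*} [CommMonoidWithZero M]
    [UniqueFactorizationMonoid M] [NormalizationMonoid M] [DecidableEq M] {p q : M}
    (hp : p ≠ 0) (hq : q ≠ 0) (h : MulIndepUpToUnits p q) :
    ∃ π₁ π₂, factorization p π₁ * factorization q π₂ ≠ factorization p π₂ * factorization q π₁ := by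
  refine exists_mul_ne_mul_of_forall_smul_ne _ _ fun r s hrs => h r s ?_
  refine associated_of_factorization_eq _ _ (pow_ne_zero r hp) (pow_ne_zero s hq) ?_
  rw [factorization_pow, factorization_pow]
  exact DFunLike.coe_injective (by simpa using hrs)

end MultiplicativeIndependence

variable {k : Type*} [Field k]

section AssociatedUpTo

/-- `p` and `q` are associated after multiplication by nonzero polynomials of degree at most `K`;
that is, `p / q` is a rational function of height at most `K`. -/
def AssociatedUpTo (K : ℕ) (p q : k[X]) : Prop :=
  ∃ v w : k[X], v ≠ 0 ∧ w ≠ 0 ∧ v.natDegree ≤ K ∧ w.natDegree ≤ K ∧ Associated (p * v) (q * w)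

lemma AssociatedUpTo.mono {K L : ℕ} (hKL : K ≤ L) {p q : k[X]} :
    AssociatedUpTo K p q → AssociatedUpTo L p q := fun ⟨v, w, hv, hw, hvK, hwK, h⟩ =>
  ⟨v, w, hv, hw, hvK.trans hKL, hwK.trans hKL, h⟩

variable [DecidableEq k]

lemma factorization_le_natDegree (p π : k[X]) : factorization p π ≤ p.natDegree := by
  rw [factorization_eq_count]
  by_cases hπ : π ∈ normalizedFactors p
  · have hp : p ≠ 0 := by
      rintro rfl
      simp at hπ
    have hdvd : π ^ (normalizedFactors p).count π ∣ p := by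
      rw [← Multiset.prod_replicate]
      exact (Multiset.prod_dvd_prod_of_le (Multiset.le_count_iff_replicate_le.mp le_rfl)).trans
        (prod_normalizedFactors hp).dvd
    have hpos : 0 < π.natDegree := (irreducible_of_normalized_factor π hπ).natDegree_pos
    calc (normalizedFactors p).count π ≤ (normalizedFactors p).count π * π.natDegree :=
          Nat.le_mul_of_pos_right _ hpos
      _ = (π ^ (normalizedFactors p).count π).natDegree := (natDegree_pow _ _).symm
      _ ≤ p.natDegree := natDegree_le_of_dvd hdvd hp
  · simp [Multiset.count_eq_zero_of_notMem hπ]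

lemma AssociatedUpTo.abs_factorization_sub_le {K : ℕ} {p q : k[X]} (hp : p ≠ 0) (hq : q ≠ 0)
    (h : AssociatedUpTo K p q) (π : k[X]) :
    |(factorization p π : ℤ) - factorization q π| ≤ K := by
  obtain ⟨v, w, hv, hw, hvK, hwK, h⟩ := h
  have hfac : factorization (p * v) π = factorization (q * w) π := by
    rw [factorization_eq_count, factorization_eq_count, h.normalizedFactors_eq]
  rw [factorization_mul hp hv, factorization_mul hq hw, Finsupp.add_apply, Finsupp.add_apply]
    at hfac
  have hvπ := factorization_le_natDegree v π
  have hwπ := factorization_le_natDegree w π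
  rw [abs_le]
  omega

end AssociatedUpTo

section Exponents

lemma AssociatedUpTo.exponent_le {K n : ℕ} {p q : k[X]} (hp : p ≠ 0) (hq : q ≠ 0)
    (hpq : ¬ Associated p q) (h : AssociatedUpTo K (p ^ n) (q ^ n)) : n ≤ K := by
  classical
  obtain ⟨π, hπ⟩ : ∃ π, factorization p π ≠ factorization q π :=
    DFunLike.ne_iff.mp fun heq => hpq (associated_of_factorization_eq p q hp hq heq)
  have hbound := h.abs_factorization_sub_le (pow_ne_zero n hp) (pow_ne_zero n hq) π
  have hsub : (1 : ℤ) ≤ |(factorization p π : ℤ) - factorization q π| :=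
    Int.one_le_abs (sub_ne_zero.mpr (mod_cast hπ))
  simp only [factorization_pow, Finsupp.smul_apply, smul_eq_mul, Nat.cast_mul, ← mul_sub, abs_mul,
    Nat.abs_cast] at hbound
  exact_mod_cast (le_mul_of_one_le_right (Nat.cast_nonneg n) hsub).trans hbound

lemma MulIndepUpToUnits.exists_exponent_le {p q : k[X]} (hp : p ≠ 0) (hq : q ≠ 0)
    (h : MulIndepUpToUnits p q) (K : ℕ) :
    ∃ M : ℕ, ∀ n m : ℕ, AssociatedUpTo K (p ^ n) (q ^ m) → n ≤ M := by
  classical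
  obtain ⟨π₁, π₂, hdet⟩ := h.exists_factorization_mul_ne hp hq
  refine ⟨K * (factorization q π₁ + factorization q π₂), fun n m hnm => ?_⟩
  have hbound := hnm.abs_factorization_sub_le (pow_ne_zero n hp) (pow_ne_zero m hq)
  simp only [factorization_pow, Finsupp.smul_apply, smul_eq_mul, Nat.cast_mul] at hbound
  have h₁ := hbound π₁
  have h₂ := hbound π₂
  zify at hdet ⊢
  generalize (factorization p π₁ : ℤ) = p₁ at *
  generalize (factorization p π₂ : ℤ) = p₂ at *
  generalize hq₁ : (factorization q π₁ : ℤ) = q₁ at *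
  generalize hq₂ : (factorization q π₂ : ℤ) = q₂ at *
  have hq₁0 : 0 ≤ q₁ := hq₁ ▸ Nat.cast_nonneg _
  have hq₂0 : 0 ≤ q₂ := hq₂ ▸ Nat.cast_nonneg _
  calc (n : ℤ) ≤ n * |p₁ * q₂ - p₂ * q₁| :=
        le_mul_of_one_le_right (Nat.cast_nonneg n) (Int.one_le_abs (sub_ne_zero.mpr hdet))
    _ = |(n * p₁ - m * q₁) * q₂ - (n * p₂ - m * q₂) * q₁| := by
        rw [← Nat.abs_cast n, ← abs_mul, Nat.abs_cast]; ring_nf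
    _ ≤ |n * p₁ - m * q₁| * q₂ + |n * p₂ - m * q₂| * q₁ := by
        simpa only [abs_mul, abs_of_nonneg hq₁0, abs_of_nonneg hq₂0] using
          abs_sub ((n * p₁ - m * q₁) * q₂) ((n * p₂ - m * q₂) * q₁)
    _ ≤ K * q₂ + K * q₁ := by gcongr
    _ = K * (q₁ + q₂) := by ring

end Exponents

section Wronskian

lemma wronskian_mul_mul_left {R : Type*} [CommRing R] (c p q : R[X]) :
    wronskian (c * p) (c * q) = c ^ 2 * wronskian p q := by
  simp only [wronskian, derivative_mul]
  ring

lemma wronskian_sum_right {R ι : Type*} [CommRing R] (p : R[X]) (S : Finset ι) (f : ι → R[X]) :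
    wronskian p (∑ i ∈ S, f i) = ∑ i ∈ S, wronskian p (f i) :=
  map_sum (wronskianBilin R p) f S

lemma associated_of_wronskian_eq_zero [CharZero k] {p q : k[X]} (hp : p ≠ 0) (hq : q ≠ 0)
    (h : wronskian p q = 0) : Associated p q := by
  obtain ⟨p', q', c, hrel, rfl, rfl⟩ := exists_reduced_factors p hp q
  rw [wronskian_mul_mul_left, mul_eq_zero] at h
  have hW := h.resolve_left (pow_ne_zero 2 (left_ne_zero_of_mul hp))
  obtain ⟨hp', hq'⟩ := hrel.isCoprime.wronskian_eq_zero_iff.mp hW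
  have isUnit_of_derivative : ∀ r : k[X], r ≠ 0 → derivative r = 0 → IsUnit r := fun r hr hr' =>
    isUnit_iff_degree_eq_zero.mpr <|
      (degree_eq_iff_natDegree_eq hr).mpr (derivative_eq_zero.mp hr')
  have hp'q' : Associated p' q' :=
    (associated_one_iff_isUnit.mpr (isUnit_of_derivative p' (right_ne_zero_of_mul hp) hp')).trans
      (associated_one_iff_isUnit.mpr (isUnit_of_derivative q' (right_ne_zero_of_mul hq) hq')).symm
  exact hp'q'.mul_left c

lemma associatedUpTo_of_wronskian_mul_eq_zero [CharZero k] {K : ℕ} {p q u v : k[X]} (hp : p ≠ 0)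
    (hq : q ≠ 0) (hu : u ≠ 0) (hv : v ≠ 0) (hpK : p.natDegree ≤ K) (hqK : q.natDegree ≤ K)
    (h : wronskian (p * u) (q * v) = 0) : AssociatedUpTo K v u := by
  refine ⟨q, p, hq, hp, hqK, hpK, ?_⟩
  rw [mul_comm v, mul_comm u]
  exact (associated_of_wronskian_eq_zero (mul_ne_zero hp hu) (mul_ne_zero hq hv) h).symm

lemma natDegree_le_of_mul_wronskian_eq {R u p g s : k[X]} (hu : u ≠ 0) (hs : s ≠ 0)
    (h : R * wronskian (p * u) g = u * s) :
    g ≠ 0 ∧ s.natDegree ≤ R.natDegree + p.natDegree + g.natDegree := by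
  have hne : R * wronskian (p * u) g ≠ 0 := h ▸ mul_ne_zero hu hs
  have hW := right_ne_zero_of_mul hne
  have hlt := natDegree_wronskian_lt_add hW
  have hpu : (p * u).natDegree ≤ p.natDegree + u.natDegree := natDegree_mul_le
  have hdeg := congrArg natDegree h
  rw [natDegree_mul (left_ne_zero_of_mul hne) hW, natDegree_mul hu hs] at hdeg
  refine ⟨?_, by omega⟩
  rintro rfl
  exact hW (wronskian_zero_right _)

lemma exists_mul_wronskian_eq_mul {R u v : k[X]} (hu : u ≠ 0) (hv : v ≠ 0)
    (huR : u ∣ R * derivative u) (hvR : v ∣ R * derivative v) (p q : k[X]) :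
    ∃ s : k[X], R * wronskian (p * u) (q * v) = u * (s * v) ∧
      s.natDegree ≤ R.natDegree + p.natDegree + q.natDegree := by
  obtain ⟨ρ, hρ⟩ := huR
  obtain ⟨σ, hσ⟩ := hvR
  set s := R * wronskian p q + p * q * (σ - ρ)
  have hs : R * wronskian (p * u) (q * v) = u * (s * v) := by
    simp only [s, wronskian, derivative_mul]
    linear_combination (p * u * q) * hσ - (p * q * v) * hρ
  refine ⟨s, hs, ?_⟩
  rcases eq_or_ne s 0 with hs0 | hs0
  · simp [hs0]
  have hdeg := (natDegree_le_of_mul_wronskian_eq hu (mul_ne_zero hs0 hv) hs).2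
  have hqv : (q * v).natDegree ≤ q.natDegree + v.natDegree := natDegree_mul_le
  rw [natDegree_mul hs0 hv] at hdeg
  omega

end Wronskian

section Elimination

variable [CharZero k] {ι : Type*}

lemma natDegree_le_natDegree_sum_of_not_associatedUpTo {R : k[X]} (hR : R ≠ 0)
    {u : ι → k[X]} (hu : ∀ i, u i ≠ 0) (huR : ∀ i, u i ∣ R * derivative (u i)) (o : ι)
    (S : Finset ι) {D : ℕ} {q : ι → k[X]} (hqD : ∀ i, (q i).natDegree ≤ D) (hqo : q o ≠ 0)
    (hS : ∀ i ∈ S, ¬ AssociatedUpTo (2 ^ S.card * (R.natDegree + D)) (u o) (u i)) :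
    q o * u o + ∑ i ∈ S, q i * u i ≠ 0 ∧
      (u o).natDegree + (R.natDegree + D) ≤
        (q o * u o + ∑ i ∈ S, q i * u i).natDegree + 2 ^ S.card * (R.natDegree + D) := by
  -- Eliminating one term replaces `D` by `R.natDegree + 2 * D`, so it doubles `R.natDegree + D`.
  induction S using Finset.cons_induction generalizing D q with
  | empty => simp [mul_ne_zero hqo (hu o), natDegree_mul hqo (hu o)]
  | cons l S hl ih =>
    simp only [Finset.mem_cons, forall_eq_or_imp, Finset.card_cons] at hS ⊢
    obtain ⟨hol, hoS⟩ := hS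
    have hcard : 2 ^ S.card * (R.natDegree + (R.natDegree + 2 * D)) =
        2 ^ (S.card + 1) * (R.natDegree + D) := by ring
    rw [← hcard] at hoS
    rw [Finset.sum_cons, ← hcard]
    rcases eq_or_ne (q l) 0 with hql | hql
    · obtain ⟨hne, hdeg⟩ := ih (fun i => (hqD i).trans (by omega)) hqo hoS
      rw [hql, zero_mul, zero_add]
      exact ⟨hne, by omega⟩
    choose s hs hsdeg using fun i =>
      exists_mul_wronskian_eq_mul (hu l) (hu i) (huR l) (huR i) (q l) (q i)
    have hsD : ∀ i, (s i).natDegree ≤ R.natDegree + 2 * D := fun i => by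
      have := hsdeg i; have := hqD l; have := hqD i; omega
    have hso : s o ≠ 0 := by
      intro hso
      have hW : wronskian (q l * u l) (q o * u o) = 0 := by
        simpa [hso, hR] using hs o
      have hD : D ≤ 2 ^ (S.card + 1) * (R.natDegree + D) :=
        (Nat.le_add_left _ _).trans (Nat.le_mul_of_pos_left _ (by positivity))
      exact hol <| (associatedUpTo_of_wronskian_mul_eq_zero hql hqo (hu l) (hu o) (hqD l) (hqD o)
        hW).mono hD
    obtain ⟨hne, hdeg⟩ := ih hsD hso hoS
    have helim : R * wronskian (q l * u l) (q o * u o + (q l * u l + ∑ i ∈ S, q i * u i)) =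
        u l * (s o * u o + ∑ i ∈ S, s i * u i) := by
      simp only [wronskian_add_right, wronskian_self_eq_zero, wronskian_sum_right, zero_add,
        mul_add, Finset.mul_sum, hs]
    obtain ⟨hne', hdeg'⟩ := natDegree_le_of_mul_wronskian_eq (hu l) hne helim
    have := hqD l
    exact ⟨hne', by omega⟩

lemma pow_dvd_mul_derivative_pow {R : Type*} [CommRing R] {p r : R[X]} (h : p ∣ r) (n : ℕ) :
    p ^ n ∣ r * derivative (p ^ n) := by
  obtain ⟨c, rfl⟩ := h
  cases n with
  | zero => simp
  | succ n =>
    rw [derivative_pow_succ]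
    exact ⟨c * (C ((n : R) + 1) * derivative p), by ring⟩

lemma exists_natDegree_pow_le_natDegree_sum [Fintype ι] {γ : ι → k[X]} (hγ : ∀ i, γ i ≠ 0) (o : ι)
    (D : ℕ) : ∃ K : ℕ, ∀ (N : ι → ℕ) (q : ι → k[X]), (∀ i, (q i).natDegree ≤ D) → q o ≠ 0 →
      (∀ i ≠ o, ¬ AssociatedUpTo K (γ o ^ N o) (γ i ^ N i)) →
      ∑ i, q i * γ i ^ N i ≠ 0 ∧
        (γ o ^ N o).natDegree ≤ (∑ i, q i * γ i ^ N i).natDegree + K := by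
  classical
  refine ⟨2 ^ (Finset.univ.erase o).card * ((∏ i, γ i).natDegree + D), fun N q hqD hqo hN => ?_⟩
  rw [← Finset.add_sum_erase _ _ (Finset.mem_univ o)]
  obtain ⟨hne, hdeg⟩ := natDegree_le_natDegree_sum_of_not_associatedUpTo
    (Finset.prod_ne_zero_iff.mpr fun i _ => hγ i) (fun i => pow_ne_zero (N i) (hγ i))
    (fun i => pow_dvd_mul_derivative_pow (Finset.dvd_prod_of_mem γ (Finset.mem_univ i)) (N i))
    o (Finset.univ.erase o) hqD hqo fun i hi => hN i (Finset.ne_of_mem_erase hi)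
  exact ⟨hne, by omega⟩

lemma exists_natDegree_pow_le_natDegree_sum_add_sum {κ : Type*} [Fintype ι] [Fintype κ]
    {α : ι → k[X]} {β : κ → k[X]} (hα : ∀ i, α i ≠ 0) (hβ : ∀ j, β j ≠ 0) {o : ι}
    (hnd : ∀ i ≠ o, ¬ Associated (α o) (α i)) (hindep : ∀ j, MulIndepUpToUnits (α o) (β j))
    (D : ℕ) : ∃ K M : ℕ, ∀ (n m : ℕ) (p : ι → k[X]) (q : κ → k[X]), M < n →
      (∀ i, (p i).natDegree ≤ D) → (∀ j, (q j).natDegree ≤ D) → p o ≠ 0 →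
      ∑ i, p i * α i ^ n + ∑ j, q j * β j ^ m ≠ 0 ∧
        (α o ^ n).natDegree ≤ (∑ i, p i * α i ^ n + ∑ j, q j * β j ^ m).natDegree + K := by
  obtain ⟨K, hK⟩ := exists_natDegree_pow_le_natDegree_sum
    (γ := Sum.elim α β) (Sum.rec hα hβ) (Sum.inl o) D
  choose M hM using fun j => (hindep j).exists_exponent_le (hα o) (hβ j) K
  refine ⟨K, max K (Finset.univ.sup M), fun n m p q hn hp hq hpo => ?_⟩
  obtain ⟨hKn, hMn⟩ := max_lt_iff.mp hn
  have hfar : ∀ i ≠ Sum.inl o, ¬ AssociatedUpTo K (α o ^ n)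
      (Sum.elim α β i ^ (Sum.elim (fun _ => n) (fun _ => m) i : ℕ)) := by
    rintro (i | j) hne hassoc
    · have hio : i ≠ o := fun h => hne (congrArg Sum.inl h)
      exact hKn.not_ge (hassoc.exponent_le (hα o) (hα i) (hnd i hio))
    · exact hMn.not_ge ((hM j n m hassoc).trans (Finset.le_sup (Finset.mem_univ j)))
  simpa using hK (Sum.elim (fun _ => n) (fun _ => m)) (Sum.elim p q) (Sum.rec hp hq) hpo hfar

end Elimination

section RecurrenceSeq

/-- The linear recurrence sequence `n ↦ ∑ i, A i (n) * α i ^ n` of polynomials with characteristic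
roots `α i`. The coefficient `A i` is a polynomial in `n` over `R[X]`, the outer variable being
`n`. -/
noncomputable def recurrenceSeq {R ι : Type*} [CommRing R] [Fintype ι] (α : ι → R[X])
    (A : ι → R[X][X]) (n : ℕ) : R[X] :=
  ∑ i, (A i).eval (n : R[X]) * α i ^ n

lemma recurrenceSeq_C_mul {R ι : Type*} [CommRing R] [Fintype ι] (α : ι → R[X])
    (A : ι → R[X][X]) (a : R[X]) (n : ℕ) :
    recurrenceSeq α (fun i => C a * A i) n = a * recurrenceSeq α A n := by
  simp only [recurrenceSeq, eval_mul, eval_C, Finset.mul_sum, mul_assoc]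

lemma exists_natDegree_eval_natCast_le {R ι : Type*} [Semiring R] [Finite ι] (A : ι → R[X][X]) :
    ∃ D : ℕ, ∀ i (n : ℕ), ((A i).eval (n : R[X])).natDegree ≤ D := by
  cases nonempty_fintype ι
  refine ⟨Finset.univ.sup fun i => (A i).support.sup fun e => ((A i).coeff e).natDegree,
    fun i n => ?_⟩
  rw [eval_eq_sum, Polynomial.sum]
  refine natDegree_sum_le_of_forall_le _ _ fun e he => ?_
  calc ((A i).coeff e * (n : R[X]) ^ e).natDegree
      ≤ ((A i).coeff e).natDegree + ((n ^ e : ℕ) : R[X]).natDegree := by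
        rw [Nat.cast_pow]; exact natDegree_mul_le
    _ = ((A i).coeff e).natDegree := by rw [natDegree_natCast, add_zero]
    _ ≤ (A i).support.sup fun e => ((A i).coeff e).natDegree :=
        Finset.le_sup (f := fun e => ((A i).coeff e).natDegree) he
    _ ≤ _ := Finset.le_sup (f := fun i => (A i).support.sup fun e => ((A i).coeff e).natDegree)
        (Finset.mem_univ i)

lemma exists_forall_lt_eval_natCast_ne_zero {R : Type*} [CommRing R] [IsDomain R] [CharZero R]
    {P : R[X]} (hP : P ≠ 0) : ∃ M : ℕ, ∀ n : ℕ, M < n → P.eval (n : R) ≠ 0 := by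
  have hfin : {n : ℕ | P.eval (n : R) = 0}.Finite :=
    (finite_setOfPred_isRoot hP).preimage Nat.cast_injective.injOn
  obtain ⟨M, hM⟩ := hfin.bddAbove
  exact ⟨M, fun n hn hn0 => hn.not_ge (hM hn0)⟩

variable {ι κ : Type*} [Fintype ι] [Fintype κ] {α : ι → k[X]} {β : κ → k[X]} {A : ι → k[X][X]}
  {B : κ → k[X][X]} {o : ι} {o' : κ}

lemma exists_natDegree_recurrenceSeq_le (hdeg : ∀ i, (α i).natDegree ≤ (α o).natDegree) :
    ∃ D : ℕ, ∀ n, (recurrenceSeq α A n).natDegree ≤ (α o ^ n).natDegree + D := by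
  obtain ⟨D, hD⟩ := exists_natDegree_eval_natCast_le A
  refine ⟨D, fun n => natDegree_sum_le_of_forall_le _ _ fun i _ => ?_⟩
  calc ((A i).eval (n : k[X]) * α i ^ n).natDegree
      ≤ ((A i).eval (n : k[X])).natDegree + (α i ^ n).natDegree := natDegree_mul_le
    _ ≤ D + (α o ^ n).natDegree := by
        rw [natDegree_pow, natDegree_pow]
        gcongr
        exacts [hD i n, hdeg i]
    _ = (α o ^ n).natDegree + D := add_comm _ _

variable [CharZero k]

lemma exists_natDegree_pow_le_natDegree_recurrenceSeq_add (hα : ∀ i, α i ≠ 0) (hβ : ∀ j, β j ≠ 0)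
    (hAo : A o ≠ 0) (hnd : ∀ i ≠ o, ¬ Associated (α o) (α i))
    (hindep : ∀ j, MulIndepUpToUnits (α o) (β j)) :
    ∃ K M : ℕ, ∀ n m : ℕ, M < n → recurrenceSeq α A n + recurrenceSeq β B m ≠ 0 ∧
      (α o ^ n).natDegree ≤ (recurrenceSeq α A n + recurrenceSeq β B m).natDegree + K := by
  obtain ⟨DA, hDA⟩ := exists_natDegree_eval_natCast_le A
  obtain ⟨DB, hDB⟩ := exists_natDegree_eval_natCast_le B
  obtain ⟨M₀, hM₀⟩ := exists_forall_lt_eval_natCast_ne_zero hAo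
  obtain ⟨K, M₁, h⟩ :=
    exists_natDegree_pow_le_natDegree_sum_add_sum hα hβ hnd hindep (max DA DB)
  refine ⟨K, max M₀ M₁, fun n m hn => ?_⟩
  obtain ⟨hn₀, hn₁⟩ := max_lt_iff.mp hn
  exact h n m _ _ hn₁ (fun i => (hDA i n).trans (le_max_left _ _))
    (fun j => (hDB j m).trans (le_max_right _ _)) (hM₀ n hn₀)

lemma tendsto_natDegree_recurrenceSeq_atTop (hα : ∀ i, α i ≠ 0) (hAo : A o ≠ 0)
    (hunit : ¬ IsUnit (α o)) (hnd : ∀ i ≠ o, ¬ Associated (α o) (α i)) :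
    Filter.Tendsto (fun n => (recurrenceSeq α A n).natDegree) Filter.atTop Filter.atTop := by
  obtain ⟨K, M, hKM⟩ := exists_natDegree_pow_le_natDegree_recurrenceSeq_add (β := Empty.elim)
    (B := Empty.elim) hα (fun j => j.elim) hAo hnd (fun j => j.elim)
  have hpos : 0 < (α o).natDegree :=
    natDegree_pos_iff_degree_pos.mpr (degree_pos_of_ne_zero_of_nonunit (hα o) hunit)
  refine Filter.tendsto_atTop.mpr fun Q =>
    Filter.eventually_atTop.mpr ⟨M + 1 + Q + K, fun n hn => ?_⟩
  have hdeg := (hKM n 0 (by omega)).2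
  have hempty : recurrenceSeq (Empty.elim : Empty → k[X]) Empty.elim 0 = 0 := Finset.sum_empty
  rw [hempty, add_zero, natDegree_pow] at hdeg
  have hle : n ≤ n * (α o).natDegree := Nat.le_mul_of_pos_right n hpos
  omega

theorem exists_natDegree_recurrenceSeq_le_natDegree_add (hα : ∀ i, α i ≠ 0) (hβ : ∀ j, β j ≠ 0)
    (hAo : A o ≠ 0) (hBo' : B o' ≠ 0) (hαnd : ∀ i ≠ o, ¬ Associated (α o) (α i))
    (hβnd : ∀ j ≠ o', ¬ Associated (β o') (β j)) (hindep : ∀ j, MulIndepUpToUnits (α o) (β j))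
    (hdeg : ∀ i, (α i).natDegree ≤ (α o).natDegree) :
    ∃ c C : ℕ, ∀ n m : ℕ, c < max n m → recurrenceSeq α A n + recurrenceSeq β B m ≠ 0 ∧
      (recurrenceSeq α A n).natDegree ≤
        (recurrenceSeq α A n + recurrenceSeq β B m).natDegree + C := by
  obtain ⟨K, N, hlower⟩ :=
    exists_natDegree_pow_le_natDegree_recurrenceSeq_add (B := B) hα hβ hAo hαnd hindep
  obtain ⟨D, hupper⟩ := exists_natDegree_recurrenceSeq_le (A := A) hdeg
  set Q := (Finset.range (N + 1)).sup fun n => (recurrenceSeq α A n).natDegree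
  obtain ⟨M, hM⟩ := Filter.eventually_atTop.mp <|
    (tendsto_natDegree_recurrenceSeq_atTop hβ hBo'
      (hindep o').not_isUnit_right hβnd).eventually_gt_atTop Q
  refine ⟨max N M, max (K + D) Q, fun n m hnm => ?_⟩
  rcases lt_or_ge N n with hn | hn
  · obtain ⟨hne, hle⟩ := hlower n m hn
    have := hupper n
    exact ⟨hne, by omega⟩
  · have hGQ : (recurrenceSeq α A n).natDegree ≤ Q :=
      Finset.le_sup (f := fun n => (recurrenceSeq α A n).natDegree)
        (Finset.mem_range_succ_iff.mpr hn)
    have hHQ : Q < (recurrenceSeq β B m).natDegree := hM m (by omega)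
    refine ⟨fun h0 => ?_, by omega⟩
    rw [eq_neg_of_add_eq_zero_left h0, natDegree_neg] at hGQ
    omega

end RecurrenceSeq

theorem stmt_3_general [CharZero k] {ι κ : Type*} [Fintype ι] [Fintype κ] {α : ι → k[X]}
    {β : κ → k[X]} {A : ι → k[X][X]} {B : κ → k[X][X]} {o : ι} {o' : κ} (hα : ∀ i, α i ≠ 0)
    (hβ : ∀ j, β j ≠ 0) (hAo : A o ≠ 0) (hBo' : B o' ≠ 0)
    (hαnd : ∀ i ≠ o, ¬ Associated (α o) (α i)) (hβnd : ∀ j ≠ o', ¬ Associated (β o') (β j))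
    (hindep : ∀ j, MulIndepUpToUnits (α o) (β j)) (hdeg : ∀ i, (α i).degree ≤ (α o).degree)
    {a b : k[X]} (ha : a ≠ 0) (hb : b ≠ 0) :
    ∃ c₁ C' : ℕ, ∀ n m : ℕ, c₁ < max n m →
      (recurrenceSeq α A n).degree ≤
        (a * recurrenceSeq α A n - b * recurrenceSeq β B m).degree + (C' : WithBot ℕ) := by
  obtain ⟨c₁, C', h⟩ := exists_natDegree_recurrenceSeq_le_natDegree_add
    (A := fun i => C a * A i) (B := fun j => C (-b) * B j) hα hβ
    (mul_ne_zero (C_ne_zero.mpr ha) hAo) (mul_ne_zero (C_ne_zero.mpr (neg_ne_zero.mpr hb)) hBo')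
    hαnd hβnd hindep fun i => natDegree_le_natDegree (hdeg i)
  refine ⟨c₁, C', fun n m hnm => ?_⟩
  obtain ⟨hne, hle⟩ := h n m hnm
  simp only [recurrenceSeq_C_mul, neg_mul, ← sub_eq_add_neg] at hne hle
  calc (recurrenceSeq α A n).degree ≤ (a * recurrenceSeq α A n).degree :=
        by rw [mul_comm a]; exact degree_le_mul_left _ ha
    _ ≤ ((a * recurrenceSeq α A n).natDegree : WithBot ℕ) := degree_le_natDegree
    _ ≤ _ := by rw [degree_eq_natDegree hne]; exact_mod_cast hle

lemma ratIsConst_div_of_associated {p q : ℂ[X]} (hq : q ≠ 0) (h : Associated p q) :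
    RatIsConst (algebraMap ℂ[X] (RatFunc ℂ) p / algebraMap ℂ[X] (RatFunc ℂ) q) := by
  obtain ⟨u, rfl⟩ := h.symm
  obtain ⟨c, -, hc⟩ := Polynomial.isUnit_iff.mp u.isUnit
  refine ⟨c, ?_⟩
  rw [← hc, map_mul, RatFunc.algebraMap_C, mul_div_cancel_left₀ _ (RatFunc.algebraMap_ne_zero hq)]

lemma PolyMultIndep.mulIndepUpToUnits {p q : ℂ[X]} (hq : q ≠ 0) (h : PolyMultIndep p q) :
    MulIndepUpToUnits p q := fun r s hrs => by
  have hconst := ratIsConst_div_of_associated (pow_ne_zero s hq) hrs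
  rw [map_pow, map_pow, div_eq_mul_inv, ← zpow_natCast, ← zpow_natCast, ← zpow_neg] at hconst
  simpa using h r (-s) hconst

end

theorem stmt_3
    (d t : ℕ)
    -- the characteristic roots (polynomials) and coefficients
    -- (the `A i`, `B j` are polynomials in `n` with coefficients in `ℂ[x]`)
    (α : Fin (d + 1) → Polynomial ℂ) (A : Fin (d + 1) → Polynomial (Polynomial ℂ))
    (β : Fin (t + 1) → Polynomial ℂ) (B : Fin (t + 1) → Polynomial (Polynomial ℂ))
    (hα0 : ∀ i, α i ≠ 0) (hA0 : ∀ i, A i ≠ 0)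
    (hβ0 : ∀ j, β j ≠ 0) (hB0 : ∀ j, B j ≠ 0)
    (hαinj : Function.Injective α) (hβinj : Function.Injective β)
    -- non-degeneracy: no ratio of distinct roots is constant
    (hGnd : ∀ i j, i ≠ j → ¬ RatIsConst
      (algebraMap (Polynomial ℂ) (RatFunc ℂ) (α i) / algebraMap (Polynomial ℂ) (RatFunc ℂ) (α j)))
    (hHnd : ∀ i j, i ≠ j → ¬ RatIsConst
      (algebraMap (Polynomial ℂ) (RatFunc ℂ) (β i) / algebraMap (Polynomial ℂ) (RatFunc ℂ) (β j)))
    -- no `αᵢ` and no `βⱼ` lies in `ℂ`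
    (hα1 : ∀ i, ∀ c : ℂ, α i ≠ Polynomial.C c)
    (hβ1 : ∀ j, ∀ c : ℂ, β j ≠ Polynomial.C c)
    -- `(α₁, βⱼ)` multiplicatively independent for all `j`
    (hindep : ∀ j, PolyMultIndep (α 0) (β j))
    -- `deg α₁ ≥ deg αᵢ` for all `i`
    (hdeg : ∀ i, (α i).degree ≤ (α 0).degree)
    (a b : Polynomial ℂ) (ha : a ≠ 0) (hb : b ≠ 0)
    (G H : ℕ → Polynomial ℂ)
    (hG : ∀ n : ℕ, G n = ∑ i, (A i).eval (n : Polynomial ℂ) * α i ^ n)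
    (hH : ∀ m : ℕ, H m = ∑ j, (B j).eval (m : Polynomial ℂ) * β j ^ m) :
    ∃ c₁ : ℕ, ∃ C' : ℕ, ∀ n m : ℕ, c₁ < max n m →
      (G n).degree ≤ (a * G n - b * H m).degree + (C' : WithBot ℕ) := by
  obtain rfl : G = recurrenceSeq α A := funext hG
  obtain rfl : H = recurrenceSeq β B := funext hH
  exact stmt_3_general hα0 hβ0 (hA0 0) (hB0 0)
    (fun i hi hassoc => hGnd 0 i hi.symm (ratIsConst_div_of_associated (hα0 i) hassoc))
    (fun j hj hassoc => hHnd 0 j hj.symm (ratIsConst_div_of_associated (hβ0 j) hassoc))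
    (fun j => (hindep j).mulIndepUpToUnits (hβ0 j)) hdeg ha hb
end
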